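/- arXiv:1802.09915 — 2 statements merged into one kernel-verified Lean document; each statement's English description precedes it below -/
import Mathlib

section
/- Let n ≥ 1, δ > 0, and let V : ℝⁿ → ℝ be a smooth potential of symbolic decay order −δ: for every multi-index α there is a constant C_α such that |∂^α V(x)| ≤ C_α (1+|x|)^{−δ−|α|} for all x ∈ ℝⁿ. Let λ > 0 and let ψ : ℝⁿ → ℂ be smooth with ∫_{ℝⁿ} |ψ|² < ∞ and −Δψ + Vψ = λψ on ℝⁿ, where Δ = Σᵢ ∂²/∂xᵢ². Then for every β ∈ ℝ one has ∫_{ℝⁿ} (1+|x|)^{2β} |ψ(x)|² dx < ∞. -/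
open MeasureTheory

/-- Euclidean Laplacian of a complex-valued function on `ℝⁿ`. -/
noncomputable def lap {n : ℕ} (f : EuclideanSpace ℝ (Fin n) → ℂ)
    (x : EuclideanSpace ℝ (Fin n)) : ℂ :=
  ∑ i : Fin n, fderiv ℝ (fun y => fderiv ℝ f y (EuclideanSpace.single i 1)) x
    (EuclideanSpace.single i 1)

namespace PosComm

open Filter Topology

abbrev E (n : ℕ) := EuclideanSpace ℝ (Fin n)

/-- basis vector -/
noncomputable abbrev e {n : ℕ} (i : Fin n) : E n := EuclideanSpace.single i 1

/-- cutoff root -/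
noncomputable def p {n : ℕ} (k : ℕ) (x : E n) : ℝ := max 0 (1 - ‖x‖ ^ 2 / ((k : ℝ) + 1) ^ 2)

lemma normsq_eq {n : ℕ} (x : E n) : ‖x‖ ^ 2 = ∑ j, x j ^ 2 := by
  rw [EuclideanSpace.norm_sq_eq]; simp

lemma abs_coord {n : ℕ} (x : E n) (i : Fin n) : |x i| ≤ ‖x‖ := by
  simpa using PiLp.norm_apply_le x i

lemma line_coord {n : ℕ} (x : E n) (i j : Fin n) :
    HasLineDerivAt ℝ (fun y : E n => y j) (if j = i then 1 else 0) x (e i) := by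
  have := ((EuclideanSpace.proj (𝕜 := ℝ) j).hasFDerivAt (x := x)).hasLineDerivAt (e i)
  simpa [Pi.single_apply] using this

lemma line_normsq {n : ℕ} (x : E n) (i : Fin n) :
    HasLineDerivAt ℝ (fun y : E n => ‖y‖ ^ 2) (2 * x i) x (e i) := by
  have := ((hasStrictFDerivAt_norm_sq x).hasFDerivAt).hasLineDerivAt (e i)
  simpa [EuclideanSpace.inner_single_right] using this

lemma hasDerivAt_maxsq (s : ℝ) : HasDerivAt (fun s : ℝ => (max 0 s) ^ 2) (2 * max 0 s) s := by
  rcases lt_trichotomy s 0 with h | h | h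
  · rw [max_eq_left h.le]
    have : (fun s : ℝ => (max 0 s) ^ 2) =ᶠ[𝓝 s] fun _ => 0 := by
      filter_upwards [Iio_mem_nhds h] with y hy
      rw [max_eq_left (le_of_lt hy)]; simp
    simpa using (hasDerivAt_const s (0 : ℝ)).congr_of_eventuallyEq this
  · subst h
    rw [hasDerivAt_iff_isLittleO]
    simp only [max_self, sub_zero, mul_zero, smul_zero]
    have h2 : (fun x : ℝ => x ^ 2) =o[𝓝 0] fun x : ℝ => x := by
      simpa using Asymptotics.isLittleO_pow_pow (𝕜 := ℝ) (m := 1) (n := 2) (by norm_num)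
    refine Asymptotics.IsBigO.trans_isLittleO (Asymptotics.IsBigO.of_bound 1 ?_) h2
    filter_upwards with x
    rcases le_total x 0 with hx | hx
    · rw [max_eq_left hx]; simp; positivity
    · rw [max_eq_right hx]; simp
  · rw [max_eq_right h.le]
    have : (fun s : ℝ => (max 0 s) ^ 2) =ᶠ[𝓝 s] fun s => s ^ 2 := by
      filter_upwards [Ioi_mem_nhds h] with y hy
      rw [max_eq_right (le_of_lt hy)]
    simpa using (hasDerivAt_pow 2 s).congr_of_eventuallyEq this

lemma p_nonneg {n : ℕ} (k : ℕ) (x : E n) : 0 ≤ p k x := le_max_left _ _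

lemma p_le {n : ℕ} (k : ℕ) (x : E n) : p k x ≤ 1 := by
  unfold p; apply max_le zero_le_one
  have : 0 ≤ ‖x‖ ^ 2 / ((k : ℝ) + 1) ^ 2 := by positivity
  linarith

lemma p_cont {n : ℕ} (k : ℕ) : Continuous (p (n := n) k) := by
  unfold p; fun_prop

lemma p_zero {n : ℕ} (k : ℕ) (x : E n) (hx : (k : ℝ) + 1 ≤ ‖x‖) : p k x = 0 := by
  unfold p; apply max_eq_left
  have : 1 ≤ ‖x‖ ^ 2 / ((k : ℝ) + 1) ^ 2 := by
    rw [le_div_iff₀ (by positivity), one_mul]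
    gcongr
  linarith

lemma p_supp {n : ℕ} (k : ℕ) : HasCompactSupport (p (n := n) k) := by
  apply HasCompactSupport.intro (isCompact_closedBall (0 : E n) ((k : ℝ) + 1))
  intro x hx
  apply p_zero
  simp at hx; exact hx.le

/-- cutoff derivative -/
noncomputable def dchi {n : ℕ} (k : ℕ) (i : Fin n) (x : E n) : ℝ :=
  2 * p k x * (-(2 * x i / ((k : ℝ) + 1) ^ 2))

lemma chi_line {n : ℕ} (k : ℕ) (i : Fin n) (x : E n) :
    HasLineDerivAt ℝ (fun y => p k y ^ 2) (dchi k i x) x (e i) := by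
  have h1 := line_normsq x i
  unfold HasLineDerivAt at *
  have h2 : HasDerivAt (fun t : ℝ => 1 - ‖x + t • e i‖ ^ 2 / ((k : ℝ) + 1) ^ 2)
      (-(2 * x i / ((k : ℝ) + 1) ^ 2)) 0 := (h1.div_const _).const_sub 1
  have h3 := (hasDerivAt_maxsq (1 - ‖x + (0 : ℝ) • e i‖ ^ 2 / ((k : ℝ) + 1) ^ 2)).comp 0 h2
  simpa [p, dchi, Function.comp_def] using h3

lemma dchi_cont {n : ℕ} (k : ℕ) (i : Fin n) : Continuous (dchi (n := n) k i) := by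
  unfold dchi; have := p_cont (n := n) k; fun_prop

/-- `|∂χ| ≤ 4 p / R` -/
lemma dchi_le {n : ℕ} (k : ℕ) (i : Fin n) (x : E n) :
    |dchi k i x| ≤ 4 * p k x / ((k : ℝ) + 1) := by
  rcases le_or_gt ((k : ℝ) + 1) ‖x‖ with h | h
  · simp [dchi, p_zero k x h]
  · have hk : (0 : ℝ) < (k : ℝ) + 1 := by positivity
    have h0 := p_nonneg k x
    have h1 : |x i| ≤ (k : ℝ) + 1 := (abs_coord x i).trans h.le
    unfold dchi
    rw [abs_mul, abs_neg, abs_div, abs_mul, abs_mul, abs_of_nonneg h0, abs_two,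
      abs_of_nonneg (by positivity : (0 : ℝ) ≤ ((k : ℝ) + 1) ^ 2)]
    calc 2 * p k x * (2 * |x i| / ((k : ℝ) + 1) ^ 2)
        ≤ 2 * p k x * (2 * ((k : ℝ) + 1) / ((k : ℝ) + 1) ^ 2) := by gcongr
      _ = _ := by field_simp; ring

lemma dchi_le' {n : ℕ} (k : ℕ) (i : Fin n) (x : E n) :
    |dchi k i x| * (1 + ‖x‖) ≤ 8 := by
  have h := dchi_le k i x
  rcases le_or_gt ((k : ℝ) + 1) ‖x‖ with h2 | h2
  · simp [dchi, p_zero k x h2]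
  · have hk : (0 : ℝ) < (k : ℝ) + 1 := by positivity
    have h1 := p_le k x
    have h0 := p_nonneg k x
    have hk' : (0 : ℝ) ≤ k := by positivity
    calc |dchi k i x| * (1 + ‖x‖) ≤ (4 * 1 / ((k : ℝ) + 1)) * (2 * ((k : ℝ) + 1)) := by
          gcongr
          · exact h.trans (by gcongr)
          · linarith
      _ = 8 := by field_simp; norm_num

lemma tendsto_R : Tendsto (fun k : ℕ => (k : ℝ) + 1) atTop atTop :=
  tendsto_atTop_add_const_right _ _ tendsto_natCast_atTop_atTop

lemma p_tendsto {n : ℕ} (x : E n) : Tendsto (fun k => p k x) atTop (𝓝 1) := by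
  have : Tendsto (fun k : ℕ => 1 - ‖x‖ ^ 2 / ((k : ℝ) + 1) ^ 2) atTop (𝓝 (1 - 0)) :=
    tendsto_const_nhds.sub (tendsto_const_nhds.div_atTop
      ((tendsto_pow_atTop two_ne_zero).comp tendsto_R))
  have h := (tendsto_const_nhds (x := (0 : ℝ))).max this
  simpa [p] using h

lemma dchi_tendsto {n : ℕ} (i : Fin n) (x : E n) : Tendsto (fun k => dchi k i x) atTop (𝓝 0) := by
  apply squeeze_zero_norm (a := fun k : ℕ => 4 / ((k : ℝ) + 1))
  · intro k
    rw [Real.norm_eq_abs]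
    refine (dchi_le k i x).trans ?_
    have := p_le k x
    gcongr
    linarith
  · exact tendsto_const_nhds.div_atTop tendsto_R

/-- Integration by parts against the cutoff. -/
lemma ibp {n : ℕ} (k : ℕ) (F F' : Fin n → E n → ℝ) (hF : ∀ i, Continuous (F i))
    (hF' : ∀ i, Continuous (F' i))
    (hd : ∀ i x, HasLineDerivAt ℝ (F i) (F' i x) x (e i)) :
    ∫ x, p k x ^ 2 * ∑ i, F' i x = - ∫ x, ∑ i, F i x * dchi k i x := by
  have hp := p_cont (n := n) k
  have hs := p_supp (n := n) k
  have i1 : ∀ i, Integrable (fun x => p k x ^ 2 * F' i x) := fun i => by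
    have := hF' i
    refine Continuous.integrable_of_hasCompactSupport (by fun_prop) ?_
    exact (hs.comp_left (g := fun s : ℝ => s ^ 2) (by simp)).mul_right
  have i3 : ∀ i, Integrable (fun x => p k x ^ 2 * F i x) := fun i => by
    have := hF i
    refine Continuous.integrable_of_hasCompactSupport (by fun_prop) ?_
    exact (hs.comp_left (g := fun s : ℝ => s ^ 2) (by simp)).mul_right
  have sd : ∀ i, HasCompactSupport (dchi (n := n) k i) := fun i => by
    unfold dchi
    exact (hs.mul_left (f := fun _ => (2 : ℝ))).mul_right
  have i2 : ∀ i, Integrable (fun x => dchi k i x * F i x) := fun i => by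
    have := hF i
    have := dchi_cont k i
    refine Continuous.integrable_of_hasCompactSupport (by fun_prop) ?_
    exact (sd i).mul_right
  have key : ∀ i, ∫ x, p k x ^ 2 * F' i x = - ∫ x, dchi k i x * F i x := fun i => by
    have := integral_bilinear_hasLineDerivAt_right_eq_neg_left_of_integrable
      (μ := (volume : Measure (E n))) (B := ContinuousLinearMap.mul ℝ ℝ)
      (f := fun x => p k x ^ 2) (f' := dchi k i) (g := F i) (g' := F' i) (v := e i)
      (by simpa using i2 i) (by simpa using i1 i) (by simpa using i3 i)
      (fun x _ => chi_line k i x) (fun x _ => hd i x)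
    simpa using this
  simp_rw [Finset.mul_sum]
  rw [integral_finsetSum _ (fun i _ => i1 i), integral_finsetSum _ (fun i _ => by
    simpa [mul_comm] using i2 i), ← Finset.sum_neg_distrib]
  refine Finset.sum_congr rfl fun i _ => ?_
  rw [key i]; simp_rw [mul_comm]

lemma fatou {n : ℕ} (f : ℕ → E n → ℝ) (g : E n → ℝ) (b : ℕ → ℝ) (B : ℝ)
    (hi : ∀ k, Integrable (f k)) (h0 : ∀ k x, 0 ≤ f k x)
    (hl : ∀ x, Tendsto (fun k => f k x) atTop (𝓝 (g x)))
    (hb : ∀ k, ∫ x, f k x ≤ b k) (hB : Tendsto b atTop (𝓝 B)) :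
    Integrable g ∧ ∫ x, g x ≤ B := by
  have g0 : ∀ x, 0 ≤ g x := fun x => ge_of_tendsto' (hl x) (fun k => h0 k x)
  have B0 : 0 ≤ B := ge_of_tendsto' hB (fun k => (integral_nonneg (h0 k)).trans (hb k))
  have h1 := MeasureTheory.lintegral_liminf_le' (μ := (volume : Measure (E n))) (u := atTop)
    (f := fun k x => ‖f k x‖ₑ) (fun k => (hi k).aestronglyMeasurable.enorm)
  have h1' : ∀ x, liminf (fun k => ‖f k x‖ₑ) atTop = ‖g x‖ₑ := fun x => (hl x).enorm.liminf_eq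
  simp_rw [h1'] at h1
  have h2 : liminf (fun k ↦ ∫⁻ x, ‖f k x‖ₑ) atTop ≤ ENNReal.ofReal B := by
    have h3 : Tendsto (fun k => ENNReal.ofReal (b k)) atTop (𝓝 (ENNReal.ofReal B)) :=
      ENNReal.tendsto_ofReal hB
    rw [← h3.liminf_eq]
    refine liminf_le_liminf (Eventually.of_forall fun k => ?_)
    rw [← ofReal_integral_norm_eq_lintegral_enorm (hi k)]
    apply ENNReal.ofReal_le_ofReal
    simpa [Real.norm_eq_abs, abs_of_nonneg (h0 k _)] using hb k
  have h4 := h1.trans h2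
  have gm : AEStronglyMeasurable g (volume : Measure (E n)) :=
    aestronglyMeasurable_of_tendsto_ae _ (fun k => (hi k).aestronglyMeasurable)
      (Eventually.of_forall hl)
  have gi : Integrable g := ⟨gm, h4.trans_lt ENNReal.ofReal_lt_top⟩
  refine ⟨gi, ?_⟩
  rw [← ofReal_integral_norm_eq_lintegral_enorm gi, ENNReal.ofReal_le_ofReal_iff B0] at h4
  simpa [Real.norm_eq_abs, abs_of_nonneg (g0 _)] using h4

/-- One-sided Gaffney-type divergence lemma. -/
lemma gaffney {n : ℕ} (F F' : Fin n → E n → ℝ) (hF : ∀ i, Continuous (F i))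
    (hF' : ∀ i, Continuous (F' i))
    (hd : ∀ i x, HasLineDerivAt ℝ (F i) (F' i x) x (e i))
    (G : E n → ℝ) (hG : Integrable G) (hFG : ∀ i x, |F i x| ≤ (1 + ‖x‖) * G x)
    (P Q : E n → ℝ) (hP : Continuous P) (P0 : ∀ x, 0 ≤ P x) (Q0 : ∀ x, 0 ≤ Q x)
    (hQ : Integrable Q)
    (hPQ : ∀ x, P x - Q x ≤ ∑ i, F' i x) :
    Integrable P ∧ ∫ x, P x ≤ ∫ x, Q x := by
  have G0 : ∀ i : Fin n, ∀ x, 0 ≤ G x := fun i x => by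
    have := (abs_nonneg _).trans (hFG i x)
    exact nonneg_of_mul_nonneg_right this (by positivity)
  have hs := fun k => p_supp (n := n) k
  have bd : ∀ k i x, ‖F i x * dchi k i x‖ ≤ 8 * G x := fun k i x => by
    rw [norm_mul, Real.norm_eq_abs, Real.norm_eq_abs]
    calc |F i x| * |dchi k i x| ≤ ((1 + ‖x‖) * G x) * |dchi k i x| := by
          gcongr; exact hFG i x
      _ = (|dchi k i x| * (1 + ‖x‖)) * G x := by ring
      _ ≤ 8 * G x := mul_le_mul_of_nonneg_right (dchi_le' k i x) (G0 i x)
  have iFd : ∀ k i, Integrable (fun x => F i x * dchi k i x) := fun k i => by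
    refine Integrable.mono' (hG.const_mul 8) ?_ (Eventually.of_forall (bd k i))
    exact ((hF i).mul (dchi_cont k i)).aestronglyMeasurable
  have lim : Tendsto (fun k => ∫ x, ∑ i, F i x * dchi k i x) atTop (𝓝 0) := by
    have h : ∀ k, ∫ x, ∑ i, F i x * dchi k i x = ∑ i, ∫ x, F i x * dchi k i x :=
      fun k => integral_finsetSum _ (fun i _ => iFd k i)
    simp_rw [h]
    rw [show (0 : ℝ) = ∑ i : Fin n, ∫ x : E n, (0 : ℝ) by simp]
    refine tendsto_finsetSum _ fun i _ => ?_
    refine tendsto_integral_of_dominated_convergence (fun x => 8 * G x)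
      (fun k => (iFd k i).aestronglyMeasurable) (hG.const_mul 8)
      (fun k => Eventually.of_forall (bd k i)) (Eventually.of_forall fun x => ?_)
    simpa using (dchi_tendsto i x).const_mul (F i x)
  have cp : ∀ k (f : E n → ℝ), Continuous f → Integrable (fun x => p k x ^ 2 * f x) :=
    fun k f hf => by
      have := p_cont (n := n) k
      refine Continuous.integrable_of_hasCompactSupport (by fun_prop) ?_
      exact ((hs k).comp_left (g := fun s : ℝ => s ^ 2) (by simp)).mul_right
  have iQ : ∀ k, Integrable (fun x => p k x ^ 2 * Q x) := fun k => by
    refine Integrable.mono' hQ ?_ (Eventually.of_forall fun x => ?_)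
    · exact ((p_cont k).pow 2).aestronglyMeasurable.mul hQ.aestronglyMeasurable
    · rw [Real.norm_eq_abs, abs_of_nonneg (mul_nonneg (by positivity) (Q0 x))]
      have := pow_le_one₀ (n := 2) (p_nonneg k x) (p_le k x)
      nlinarith [Q0 x]
  refine fatou (fun k x => p k x ^ 2 * P x) P
    (fun k => (∫ x, Q x) - ∫ x, ∑ i, F i x * dchi k i x) _ (fun k => cp k P hP)
    (fun k x => mul_nonneg (by positivity) (P0 x)) (fun x => ?_) (fun k => ?_) ?_
  · simpa using ((p_tendsto x).pow 2).mul_const (P x)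
  · have h := ibp k F F' hF hF' hd
    have iS : Integrable (fun x => p k x ^ 2 * ∑ i, F' i x) :=
      cp k _ (continuous_finsetSum _ fun i _ => hF' i)
    have h5 : ∫ x, p k x ^ 2 * P x ≤ ∫ x, (Q x + p k x ^ 2 * ∑ i, F' i x) := by
      refine integral_mono (cp k P hP) (hQ.add iS) fun x => ?_
      have := pow_le_one₀ (n := 2) (p_nonneg k x) (p_le k x)
      have h6 : 0 ≤ p k x ^ 2 := by positivity
      have h7 := mul_le_mul_of_nonneg_left (hPQ x) h6
      have h8 := mul_le_mul_of_nonneg_right this (Q0 x)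
      simp only
      linarith [mul_sub (p k x ^ 2) (P x) (Q x)]
    rw [integral_add hQ iS, h] at h5
    linarith
  · simpa using tendsto_const_nhds.sub lim

lemma lmul {n : ℕ} {f g : E n → ℝ} {f' g' : ℝ} {x v : E n} (hf : HasLineDerivAt ℝ f f' x v)
    (hg : HasLineDerivAt ℝ g g' x v) :
    HasLineDerivAt ℝ (fun y => f y * g y) (f' * g x + f x * g') x v := by
  unfold HasLineDerivAt at *
  have h := hf.mul hg
  simp only [zero_smul, add_zero] at h
  exact h

lemma ladd {n : ℕ} {f g : E n → ℝ} {f' g' : ℝ} {x v : E n} (hf : HasLineDerivAt ℝ f f' x v)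
    (hg : HasLineDerivAt ℝ g g' x v) :
    HasLineDerivAt ℝ (fun y => f y + g y) (f' + g') x v := by
  unfold HasLineDerivAt at *
  exact hf.add hg

lemma lsub {n : ℕ} {f g : E n → ℝ} {f' g' : ℝ} {x v : E n} (hf : HasLineDerivAt ℝ f f' x v)
    (hg : HasLineDerivAt ℝ g g' x v) :
    HasLineDerivAt ℝ (fun y => f y - g y) (f' - g') x v := by
  unfold HasLineDerivAt at *
  exact hf.sub hg

lemma lconst {n : ℕ} (c : ℝ) (x v : E n) : HasLineDerivAt ℝ (fun _ : E n => c) 0 x v := by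
  unfold HasLineDerivAt
  exact hasDerivAt_const _ _

lemma lsum {n : ℕ} {f : Fin n → E n → ℝ} {f' : Fin n → ℝ} {x v : E n}
    (hf : ∀ i, HasLineDerivAt ℝ (f i) (f' i) x v) :
    HasLineDerivAt ℝ (fun y => ∑ i, f i y) (∑ i, f' i) x v := by
  unfold HasLineDerivAt at *
  exact HasDerivAt.fun_sum fun i _ => hf i

lemma lcomp {n : ℕ} {f : E n → ℝ} {f' : ℝ} {x v : E n} {φ : ℝ → ℝ} {φ' : ℝ}
    (hφ : HasDerivAt φ φ' (f x)) (hf : HasLineDerivAt ℝ f f' x v) :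
    HasLineDerivAt ℝ (fun y => φ (f y)) (φ' * f') x v := by
  unfold HasLineDerivAt at *
  have h0 : f x = f (x + (0 : ℝ) • v) := by simp
  rw [h0] at hφ
  exact hφ.comp (0 : ℝ) hf

lemma caccioppoli {n : ℕ} (u V : E n → ℝ) (g : Fin n → E n → ℝ) (h : Fin n → Fin n → E n → ℝ)
    (lam K : ℝ) (cu : Continuous u) (cg : ∀ i, Continuous (g i)) (ch : ∀ i j, Continuous (h i j))
    (du : ∀ i x, HasLineDerivAt ℝ u (g i x) x (e i))
    (dg : ∀ j i x, HasLineDerivAt ℝ (g j) (h j i x) x (e i))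
    (eqn : ∀ x, ∑ i, h i i x = (V x - lam) * u x)
    (hK : ∀ x, |V x - lam| ≤ K) (hu2 : Integrable (fun x => u x ^ 2)) :
    Integrable (fun x => ∑ i, g i x ^ 2) := by
  have hI := fun k => ibp k (fun i x => u x * g i x) (fun i x => g i x * g i x + u x * h i i x)
    (fun i => by have := cg i; fun_prop) (fun i => by have := cg i; have := ch i i; fun_prop)
    (fun i x => lmul (du i x) (dg i i x))
  have cp : ∀ k (f : E n → ℝ), Continuous f → Integrable (fun x => p k x * f x) :=
    fun k f hf => by
      have := p_cont (n := n) k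
      refine Continuous.integrable_of_hasCompactSupport (by fun_prop) ?_
      exact (p_supp k).mul_right
  have := (fatou (fun k x => 1 / 2 * (p k x ^ 2 * ∑ i, g i x ^ 2))
    (fun x => 1 / 2 * ∑ i, g i x ^ 2)
    (fun _ => ∫ x, (K + 8 * n) * u x ^ 2) _ (fun k => ?_) (fun k x => ?_) (fun x => ?_)
    (fun k => ?_) tendsto_const_nhds).1
  · simpa using this.const_mul 2
  · refine Integrable.const_mul ?_ _
    have h1 := cp k (fun x => p k x * ∑ i, g i x ^ 2) (by have := p_cont (n := n) k; fun_prop)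
    refine h1.congr (Eventually.of_forall fun x => ?_)
    simp only; ring
  · have : 0 ≤ ∑ i, g i x ^ 2 := Finset.sum_nonneg fun i _ => sq_nonneg _
    positivity
  · have := (((p_tendsto x).pow 2).mul_const (∑ i, g i x ^ 2)).const_mul (1 / 2)
    rwa [one_pow, one_mul] at this
  · have hi := hI k
    have cpp := p_cont (n := n) k
    have ia : Integrable (fun x => p k x ^ 2 * ∑ i, (g i x * g i x + u x * h i i x)) := by
      refine (cp k (fun x => p k x * ∑ i, (g i x * g i x + u x * h i i x))
        (by fun_prop)).congr (Eventually.of_forall fun x => ?_)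
      simp only; ring
    have ib : Integrable (fun x => ∑ i, u x * g i x * dchi k i x) := by
      refine (cp k (fun x => ∑ i, u x * g i x * (2 * (-(2 * x i / ((k : ℝ) + 1) ^ 2))))
        (by fun_prop)).congr (Eventually.of_forall fun x => ?_)
      simp only [Finset.mul_sum]
      refine Finset.sum_congr rfl fun i _ => ?_
      unfold dchi; ring
    have iL : Integrable (fun x => 1 / 2 * (p k x ^ 2 * ∑ i, g i x ^ 2)) := by
      refine Integrable.const_mul ?_ _
      refine (cp k (fun x => p k x * ∑ i, g i x ^ 2) (by fun_prop)).congr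
        (Eventually.of_forall fun x => ?_)
      simp only; ring
    have hm : ∫ x, 1 / 2 * (p k x ^ 2 * ∑ i, g i x ^ 2) ≤
        ∫ x, ((p k x ^ 2 * ∑ i, (g i x * g i x + u x * h i i x)
          + ∑ i, u x * g i x * dchi k i x) + (K + 8 * n) * u x ^ 2) := by
      refine integral_mono iL ((ia.add ib).add (hu2.const_mul _)) fun x => ?_
      simp only
      have e1 : ∑ i, (g i x * g i x + u x * h i i x)
          = ∑ i, g i x ^ 2 + (V x - lam) * u x ^ 2 := by
        rw [Finset.sum_add_distrib, ← Finset.mul_sum, eqn]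
        simp_rw [← sq]; ring
      have e2 : -(1 / 2 * (p k x ^ 2 * ∑ i, g i x ^ 2) + 8 * n * u x ^ 2)
          ≤ ∑ i, u x * g i x * dchi k i x := by
        have : -(1 / 2 * (p k x ^ 2 * ∑ i, g i x ^ 2) + 8 * n * u x ^ 2)
          = ∑ i, -(1 / 2 * (p k x ^ 2 * g i x ^ 2) + 8 * u x ^ 2) := by
          rw [Finset.sum_neg_distrib, Finset.sum_add_distrib, ← Finset.mul_sum, ← Finset.mul_sum]
          simp; ring
        rw [this]
        refine Finset.sum_le_sum fun i _ => ?_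
        have hd : |dchi k i x| ≤ 4 * p k x := by
          refine (dchi_le k i x).trans (div_le_self ?_ ?_)
          · have := p_nonneg k x; positivity
          · linarith [(Nat.cast_nonneg k : (0 : ℝ) ≤ k)]
        have h3 : |u x * g i x * dchi k i x| ≤ |u x| * |g i x| * (4 * p k x) := by
          rw [abs_mul, abs_mul]; gcongr
        have h4 := neg_abs_le (u x * g i x * dchi k i x)
        have h5 := sq_nonneg (p k x * |g i x| - 4 * |u x|)
        have h6 := sq_abs (u x)
        have h7 := sq_abs (g i x)
        have h8 : (p k x * |g i x| - 4 * |u x|) ^ 2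
          = p k x ^ 2 * g i x ^ 2 - 8 * (p k x * |g i x| * |u x|) + 16 * u x ^ 2 := by
          rw [← h6, ← h7]; ring
        nlinarith
      have h1 := pow_le_one₀ (n := 2) (p_nonneg k x) (p_le k x)
      have h6 : 0 ≤ p k x ^ 2 := by positivity
      have e3 : -(K * u x ^ 2) ≤ p k x ^ 2 * ((V x - lam) * u x ^ 2) := by
        have hKx := hK x
        have a1 : -|V x - lam| ≤ V x - lam := neg_abs_le _
        have a2 : -K ≤ p k x ^ 2 * (V x - lam) := by
          have hK0 : 0 ≤ K := (abs_nonneg _).trans hKx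
          nlinarith
        have := mul_le_mul_of_nonneg_right a2 (sq_nonneg (u x))
        linarith
      rw [e1, mul_add]
      linarith
    rw [integral_add (by exact ia.add ib) (hu2.const_mul _), integral_add ia ib, hi] at hm
    linarith

/-! Weights. -/

/-- rho -/
noncomputable def rho {n : ℕ} (x : E n) : ℝ := 1 + ‖x‖ ^ 2

noncomputable def W (t : ℝ) (k : ℕ) (r : ℝ) : ℝ := (r / (1 + t * r)) ^ k
noncomputable def W1 (t : ℝ) (k : ℕ) (r : ℝ) : ℝ := k * W t k r / (r * (1 + t * r))
noncomputable def b (t r : ℝ) : ℝ := (r - 1) / (r * (1 + t * r))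
noncomputable def b1 (t r : ℝ) : ℝ := (1 + 2 * t * r - t * r ^ 2) / (r * (1 + t * r)) ^ 2
noncomputable def M (n : ℕ) (t : ℝ) (k : ℕ) (r : ℝ) : ℝ := W t k r * (n + 2 * k * b t r)
noncomputable def M1 (n : ℕ) (t : ℝ) (k : ℕ) (r : ℝ) : ℝ :=
  W1 t k r * (n + 2 * k * b t r) + W t k r * (2 * k * b1 t r)

lemma W_deriv (t : ℝ) (ht : 0 < t) (k : ℕ) (r : ℝ) (hr : 0 < r) :
    HasDerivAt (W t k) (W1 t k r) r := by
  have h1 : HasDerivAt (fun r : ℝ => 1 + t * r) t r := by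
    simpa using ((hasDerivAt_id r).const_mul t).const_add 1
  have hp : 0 < 1 + t * r := by positivity
  have h2 : HasDerivAt (fun r : ℝ => r / (1 + t * r)) (1 / (1 + t * r) ^ 2) r := by
    refine HasDerivAt.congr_deriv ((hasDerivAt_id r).div h1 hp.ne') ?_
    simp only [id]
    congr 1
    ring
  have h3 := h2.fun_pow k
  refine HasDerivAt.congr_deriv h3 ?_
  unfold W1 W
  rcases k with _ | k
  · simp
  · rw [Nat.add_sub_cancel, pow_succ (r / (1 + t * r)) k]
    generalize (r / (1 + t * r)) ^ k = A
    field_simp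

lemma b_deriv (t : ℝ) (ht : 0 < t) (r : ℝ) (hr : 0 < r) : HasDerivAt (b t) (b1 t r) r := by
  have h1 : HasDerivAt (fun r : ℝ => 1 + t * r) t r := by
    simpa using ((hasDerivAt_id r).const_mul t).const_add 1
  have hp : 0 < 1 + t * r := by positivity
  have h2 := ((hasDerivAt_id r).sub_const 1).div ((hasDerivAt_id r).mul h1) (by simp; constructor <;> positivity)
  refine HasDerivAt.congr_deriv h2 ?_
  unfold b1
  simp only [Pi.mul_apply, id]
  congr 1
  ring

lemma M_deriv (n : ℕ) (t : ℝ) (ht : 0 < t) (k : ℕ) (r : ℝ) (hr : 0 < r) :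
    HasDerivAt (M n t k) (M1 n t k r) r := by
  exact (W_deriv t ht k r hr).mul (((b_deriv t ht r hr).const_mul (2 * (k : ℝ))).const_add (n : ℝ))

lemma M_eq (n : ℕ) (t : ℝ) (k : ℕ) (r : ℝ) :
    M n t k r = n * W t k r + 2 * W1 t k r * (r - 1) := by
  unfold M W1 b; ring

lemma W_nonneg (t : ℝ) (ht : 0 < t) (k : ℕ) (r : ℝ) (hr : 0 < r) : 0 ≤ W t k r := by
  unfold W; positivity

lemma W_le (t : ℝ) (ht : 0 < t) (k : ℕ) (r : ℝ) (hr : 0 < r) : W t k r ≤ r ^ k := by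
  unfold W
  gcongr
  apply div_le_self hr.le
  nlinarith

lemma W_le' (t : ℝ) (ht : 0 < t) (k : ℕ) (r : ℝ) (hr : 0 < r) : W t k r ≤ (1 / t) ^ k := by
  unfold W
  gcongr ?_ ^ k
  rw [div_le_div_iff₀ (by positivity) ht]
  linarith

lemma W1_nonneg (t : ℝ) (ht : 0 < t) (k : ℕ) (r : ℝ) (hr : 0 < r) : 0 ≤ W1 t k r := by
  have := W_nonneg t ht k r hr
  unfold W1; positivity

lemma W1_le (t : ℝ) (ht : 0 < t) (k : ℕ) (r : ℝ) (hr : 0 < r) : W1 t k r ≤ k * W t k r / r := by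
  have := W_nonneg t ht k r hr
  unfold W1
  gcongr
  nlinarith [mul_pos ht (mul_pos hr hr)]

lemma b_nonneg (t : ℝ) (ht : 0 < t) (r : ℝ) (hr : 1 ≤ r) : 0 ≤ b t r := by
  unfold b
  have : 0 ≤ r - 1 := by linarith
  positivity

lemma b_le (t : ℝ) (ht : 0 < t) (r : ℝ) (hr : 1 ≤ r) : b t r ≤ 1 := by
  unfold b
  rw [div_le_one (by positivity)]
  nlinarith [mul_pos ht (by linarith : 0 < r)]

lemma b1_le (t : ℝ) (ht : 0 < t) (r : ℝ) (hr : 1 ≤ r) : |b1 t r| ≤ 1 / r := by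
  have hr0 : 0 < r := by linarith
  have h : 0 < r * (1 + t * r) := by positivity
  unfold b1
  rw [abs_div, abs_of_nonneg (sq_nonneg (r * (1 + t * r))), div_le_div_iff₀ (by positivity) hr0]
  have h1 : |1 + 2 * t * r - t * r ^ 2| ≤ r * (1 + t * r) ^ 2 := by
    have : 0 < t * r := by positivity
    rw [abs_le]; constructor
    · nlinarith [mul_pos this hr0, mul_pos (mul_pos this this) hr0]
    · nlinarith [mul_pos this hr0, mul_pos (mul_pos this this) hr0]
  calc _ ≤ r * (1 + t * r) ^ 2 * r := by gcongr
    _ = _ := by ring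

lemma M_nonneg (n : ℕ) (t : ℝ) (ht : 0 < t) (k : ℕ) (r : ℝ) (hr : 1 ≤ r) : 0 ≤ M n t k r := by
  have := W_nonneg t ht k r (by linarith)
  have := b_nonneg t ht r hr
  unfold M; positivity

lemma M_le (n : ℕ) (t : ℝ) (ht : 0 < t) (k : ℕ) (r : ℝ) (hr : 1 ≤ r) :
    M n t k r ≤ (n + 2 * k) * W t k r := by
  have := W_nonneg t ht k r (by linarith)
  have := b_le t ht r hr
  unfold M
  rw [mul_comm]
  have hk : (0 : ℝ) ≤ k := Nat.cast_nonneg k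
  refine mul_le_mul_of_nonneg_right ?_ ‹_›
  nlinarith

lemma M1_le (n : ℕ) (t : ℝ) (ht : 0 < t) (k : ℕ) (r : ℝ) (hr : 1 ≤ r) :
    |M1 n t k r| ≤ (k * (n + 2 * k) + 2 * k) * (W t k r / r) := by
  have hr0 : 0 < r := by linarith
  have w0 := W_nonneg t ht k r hr0
  have w1 := W1_nonneg t ht k r hr0
  have w2 := W1_le t ht k r hr0
  have h0 := b_nonneg t ht r hr
  have h1 := b_le t ht r hr
  have h2 := b1_le t ht r hr
  have hk : (0 : ℝ) ≤ k := Nat.cast_nonneg k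
  unfold M1
  refine (abs_add_le _ _).trans ?_
  rw [abs_of_nonneg (a := W1 t k r * _) (by positivity), abs_mul, abs_of_nonneg w0, abs_mul,
    abs_of_nonneg (a := 2 * (k : ℝ)) (by positivity)]
  have a1 : W1 t k r * (n + 2 * k * b t r) ≤ (k * W t k r / r) * (n + 2 * k * 1) := by gcongr
  have a2 : W t k r * (2 * k * |b1 t r|) ≤ W t k r * (2 * k * (1 / r)) := by gcongr
  refine (add_le_add a1 a2).trans (le_of_eq ?_)
  ring

lemma rho_ge {n : ℕ} (x : E n) : 1 ≤ rho x := by unfold rho; nlinarith [sq_nonneg ‖x‖]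

lemma rho_pos {n : ℕ} (x : E n) : 0 < rho x := lt_of_lt_of_le one_pos (rho_ge x)

lemma rho_cont {n : ℕ} : Continuous (rho (n := n)) := by unfold rho; fun_prop

lemma rho_line {n : ℕ} (x : E n) (i : Fin n) :
    HasLineDerivAt ℝ (rho (n := n)) (2 * x i) x (e i) := by
  have h := ladd (lconst 1 x (e i)) (line_normsq x i)
  rw [zero_add] at h
  exact h

lemma cW {n : ℕ} (t : ℝ) (ht : 0 < t) (k : ℕ) : Continuous (fun x : E n => W t k (rho x)) := by
  rw [continuous_iff_continuousAt]
  exact fun x => ContinuousAt.comp (f := rho) (W_deriv t ht k _ (rho_pos x)).continuousAt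
    rho_cont.continuousAt

lemma cM {n : ℕ} (t : ℝ) (ht : 0 < t) (k : ℕ) : Continuous (fun x : E n => M n t k (rho x)) := by
  rw [continuous_iff_continuousAt]
  exact fun x => ContinuousAt.comp (f := rho) (M_deriv n t ht k _ (rho_pos x)).continuousAt
    rho_cont.continuousAt

lemma rden {n : ℕ} (t : ℝ) (ht : 0 < t) (x : E n) : rho x * (1 + t * rho x) ≠ 0 := by
  have := rho_pos x
  positivity

lemma cW1 {n : ℕ} (t : ℝ) (ht : 0 < t) (k : ℕ) : Continuous (fun x : E n => W1 t k (rho x)) := by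
  have h1 := cW (n := n) t ht k
  have h2 := rho_cont (n := n)
  unfold W1
  exact Continuous.div (by fun_prop) (by fun_prop) (rden t ht)

lemma cM1 {n : ℕ} (t : ℝ) (ht : 0 < t) (k : ℕ) : Continuous (fun x : E n => M1 n t k (rho x)) := by
  have h1 := cW (n := n) t ht k
  have h0 := cW1 (n := n) t ht k
  have h2 := rho_cont (n := n)
  have h3 : Continuous (fun x : E n => b t (rho x)) := by
    unfold b
    exact Continuous.div (by fun_prop) (by fun_prop) (rden t ht)
  have h4 : Continuous (fun x : E n => b1 t (rho x)) := by
    unfold b1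
    exact Continuous.div (by fun_prop) (by fun_prop) (fun x => pow_ne_zero 2 (rden t ht x))
  unfold M1
  fun_prop

/-- algebraic pointwise lower bound -/
lemma alg_bound (w w1 m1 r u S N T V lam C1 κ K2 : ℝ) (hr : 1 ≤ r) (w0 : 0 ≤ w) (w10 : 0 ≤ w1)
    (hw1 : w1 ≤ κ * (w / r)) (hm1 : |m1| ≤ C1 * (w / r)) (hS : S ^ 2 ≤ r * N)
    (hK2 : w * (2 * |T| + |V| + (4 * C1 ^ 2 + κ ^ 2) / r) ≤ lam / 2 * w + K2) :
    lam / 2 * w * u ^ 2 - K2 * u ^ 2 ≤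
      2 * (4 * w1 * S ^ 2 + 2 * w * N - w * T * u ^ 2 + 2 * m1 * u * S) - 2 * w1 * u * S
        - w * N - w * (V - lam) * u ^ 2 := by
  have hr0 : 0 < r := by linarith
  have q : 0 ≤ w / r := by positivity
  have hSN : (w / r) * S ^ 2 ≤ w * N := by
    calc (w / r) * S ^ 2 ≤ (w / r) * (r * N) := by gcongr
      _ = w * N := by field_simp
  have a1 : -((w / r) * S ^ 2 + 4 * C1 ^ 2 * (w / r) * u ^ 2) ≤ 4 * m1 * u * S := by
    have h1 : |4 * m1 * u * S| ≤ 4 * (C1 * (w / r)) * |u| * |S| := by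
      rw [abs_mul, abs_mul, abs_mul, abs_of_pos (by norm_num : (0 : ℝ) < 4)]
      gcongr
    have h2 : 0 ≤ (w / r) * (|S| - 2 * C1 * |u|) ^ 2 := by positivity
    have h3 : (|S| - 2 * C1 * |u|) ^ 2 = S ^ 2 - 4 * C1 * |u| * |S| + 4 * C1 ^ 2 * u ^ 2 := by
      rw [← sq_abs S, ← sq_abs u]; ring
    rw [h3] at h2
    have h4 := neg_abs_le (4 * m1 * u * S)
    linarith
  have a2 : 2 * w1 * u * S ≤ (w / r) * S ^ 2 + κ ^ 2 * (w / r) * u ^ 2 := by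
    have h1 : |2 * w1 * u * S| ≤ 2 * (κ * (w / r)) * |u| * |S| := by
      rw [abs_mul, abs_mul, abs_mul, abs_of_pos (by norm_num : (0 : ℝ) < 2), abs_of_nonneg w10]
      gcongr
    have h2 : 0 ≤ (w / r) * (|S| - κ * |u|) ^ 2 := by positivity
    have h3 : (|S| - κ * |u|) ^ 2 = S ^ 2 - 2 * κ * |u| * |S| + κ ^ 2 * u ^ 2 := by
      rw [← sq_abs S, ← sq_abs u]; ring
    rw [h3] at h2
    have h4 := le_abs_self (2 * w1 * u * S)
    linarith
  have a3 : 0 ≤ w1 * S ^ 2 := by positivity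
  have a0 : 0 ≤ w * N := le_trans (by positivity) hSN
  have u0 : 0 ≤ u ^ 2 := sq_nonneg u
  have a4 := mul_le_mul_of_nonneg_right hK2 u0
  have a5 : w * T * u ^ 2 ≤ w * |T| * u ^ 2 := by gcongr; exact le_abs_self T
  have a6 : w * V * u ^ 2 ≤ w * |V| * u ^ 2 := by gcongr; exact le_abs_self V
  have a7 : w * (2 * |T| + |V| + (4 * C1 ^ 2 + κ ^ 2) / r) * u ^ 2 =
    2 * (w * |T| * u ^ 2) + w * |V| * u ^ 2 + 4 * C1 ^ 2 * (w / r) * u ^ 2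
      + κ ^ 2 * (w / r) * u ^ 2 := by ring
  rw [a7] at a4
  linarith

lemma cs_bound {n : ℕ} (x : E n) (g : Fin n → ℝ) :
    (∑ j, x j * g j) ^ 2 ≤ ‖x‖ ^ 2 * ∑ j, g j ^ 2 := by
  rw [normsq_eq]
  exact Finset.sum_mul_sq_le_sq_mul_sq _ _ _

lemma F_bound {n : ℕ} (x : E n) (i : Fin n) (g : Fin n → ℝ) (w m u q A K : ℝ) (hK : 0 ≤ K)
    {k : ℕ} (hA : 0 ≤ A) (w0 : 0 ≤ w) (hw : w ≤ A) (m0 : 0 ≤ m) (hm : m ≤ (n + 2 * k) * w)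
    (hq : |q| ≤ K) :
    |2 * (2 * (g i * (w * ∑ j, x j * g j)) - x i * (w * ∑ j, g j ^ 2)
      + x i * (q * (w * (u * u))) + m * (u * g i)) - w * (u * g i)| ≤
    (1 + ‖x‖) * ((A * (6 + 2 * K + 2 * (n + 2 * k) + 1)) * (u ^ 2 + ∑ j, g j ^ 2)) := by
  have hS := cs_bound x g
  have hgi : g i ^ 2 ≤ ∑ j, g j ^ 2 :=
    Finset.single_le_sum (f := fun j => g j ^ 2) (fun j _ => sq_nonneg _) (Finset.mem_univ i)
  have hxi := abs_coord x i
  generalize (∑ j, x j * g j) = S at *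
  generalize (∑ j, g j ^ 2) = N at *
  generalize g i = γ at *
  generalize x i = ξ at *
  have hy : 0 ≤ ‖x‖ := norm_nonneg x
  generalize ‖x‖ = y at *
  have N0 : 0 ≤ N := (sq_nonneg _).trans hgi
  have hn : (0 : ℝ) ≤ n := Nat.cast_nonneg n
  have hk : (0 : ℝ) ≤ k := Nat.cast_nonneg k
  have b1 : |γ * S| ≤ y * N := by
    apply abs_le_of_sq_le_sq _ (by positivity)
    calc (γ * S) ^ 2 = γ ^ 2 * S ^ 2 := by ring
      _ ≤ N * (y ^ 2 * N) := by gcongr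
      _ = (y * N) ^ 2 := by ring
  have b2 : |u * γ| ≤ u ^ 2 + N := by
    rw [abs_le]; constructor <;> nlinarith [sq_nonneg (u + γ), sq_nonneg (u - γ)]
  have u0 := sq_nonneg u
  have hmA : m ≤ (n + 2 * k) * A := hm.trans (by gcongr)
  have t1 : |γ * (w * S)| ≤ A * (y * N) := by
    rw [show γ * (w * S) = w * (γ * S) by ring, abs_mul, abs_of_nonneg w0]
    gcongr
  have t2 : |ξ * (w * N)| ≤ A * (y * N) := by
    rw [show ξ * (w * N) = w * (ξ * N) by ring, abs_mul, abs_of_nonneg w0, abs_mul,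
      abs_of_nonneg N0]
    gcongr
  have t3 : |ξ * (q * (w * (u * u)))| ≤ A * (y * (K * u ^ 2)) := by
    rw [show ξ * (q * (w * (u * u))) = w * (ξ * (q * u ^ 2)) by ring, abs_mul, abs_of_nonneg w0,
      abs_mul, abs_mul, abs_of_nonneg u0]
    gcongr
  have t4 : |m * (u * γ)| ≤ (n + 2 * k) * A * (u ^ 2 + N) := by
    rw [abs_mul, abs_of_nonneg m0]
    gcongr
  have t5 : |w * (u * γ)| ≤ A * (u ^ 2 + N) := by
    rw [abs_mul, abs_of_nonneg w0]
    gcongr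
  have tri : |2 * (2 * (γ * (w * S)) - ξ * (w * N) + ξ * (q * (w * (u * u))) + m * (u * γ))
      - w * (u * γ)| ≤ 4 * |γ * (w * S)| + 2 * |ξ * (w * N)| + 2 * |ξ * (q * (w * (u * u)))|
        + 2 * |m * (u * γ)| + |w * (u * γ)| := by
    rw [abs_le]
    constructor <;>
    linarith [neg_abs_le (γ * (w * S)), neg_abs_le (ξ * (w * N)),
      neg_abs_le (ξ * (q * (w * (u * u)))), neg_abs_le (m * (u * γ)), neg_abs_le (w * (u * γ)),
      le_abs_self (γ * (w * S)), le_abs_self (ξ * (w * N)),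
      le_abs_self (ξ * (q * (w * (u * u)))), le_abs_self (m * (u * γ)), le_abs_self (w * (u * γ))]
  refine tri.trans ?_
  have fin : (1 + y) * ((A * (6 + 2 * K + 2 * (n + 2 * k) + 1)) * (u ^ 2 + N))
    - (6 * (A * (y * N)) + 2 * (A * (y * (K * u ^ 2))) + 2 * ((n + 2 * k) * A * (u ^ 2 + N))
      + A * (u ^ 2 + N))
    = A * y * (6 * u ^ 2 + 2 * K * N + 2 * (n + 2 * k) * (u ^ 2 + N) + (u ^ 2 + N))
      + A * (6 + 2 * K) * (u ^ 2 + N) := by ring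
  have fin2 : 0 ≤ A * y * (6 * u ^ 2 + 2 * K * N + 2 * (n + 2 * k) * (u ^ 2 + N) + (u ^ 2 + N))
      + A * (6 + 2 * K) * (u ^ 2 + N) := by positivity
  linarith

lemma core {n : ℕ} (k : ℕ) (t : ℝ) (ht : 0 < t) (u V : E n → ℝ) (g v : Fin n → E n → ℝ)
    (h : Fin n → Fin n → E n → ℝ)
    (lam K K2 : ℝ) (hlam : 0 < lam) (hK20 : 0 ≤ K2)
    (cu : Continuous u) (cV : Continuous V) (cg : ∀ i, Continuous (g i))
    (cv : ∀ i, Continuous (v i)) (ch : ∀ i j, Continuous (h i j))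
    (du : ∀ i x, HasLineDerivAt ℝ u (g i x) x (e i))
    (dV : ∀ i x, HasLineDerivAt ℝ V (v i x) x (e i))
    (dg : ∀ j i x, HasLineDerivAt ℝ (g j) (h j i x) x (e i))
    (sym : ∀ i j x, h i j x = h j i x)
    (eqn : ∀ x, ∑ i, h i i x = (V x - lam) * u x)
    (hK : ∀ x, |V x - lam| ≤ K) (hu2 : Integrable (fun x => u x ^ 2))
    (hK2 : ∀ x w, 0 ≤ w → w ≤ rho x ^ k →
      w * (2 * |∑ i, v i x * x i| + |V x| +
        (4 * ((k : ℝ) * (n + 2 * k) + 2 * k) ^ 2 + (k : ℝ) ^ 2) / rho x) ≤ lam / 2 * w + K2) :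
    Integrable (fun x => lam / 2 * W t k (rho x) * u x ^ 2) ∧
      ∫ x, lam / 2 * W t k (rho x) * u x ^ 2 ≤ ∫ x, K2 * u x ^ 2 := by
  have hN := caccioppoli u V g h lam K cu cg ch du dg eqn hK hu2
  have c0 := cW (n := n) t ht k
  have c1 := cW1 (n := n) t ht k
  have c2 := cM (n := n) t ht k
  have c3 := cM1 (n := n) t ht k
  have dW : ∀ (i : Fin n) (x : E n), HasLineDerivAt ℝ (fun x => W t k (rho x)) (W1 t k (rho x) * (2 * x i)) x (e i) :=
    fun i x => lcomp (W_deriv t ht k _ (rho_pos x)) (rho_line x i)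
  have dM : ∀ (i : Fin n) (x : E n), HasLineDerivAt ℝ (fun x => M n t k (rho x)) (M1 n t k (rho x) * (2 * x i)) x
      (e i) :=
    fun i x => lcomp (M_deriv n t ht k _ (rho_pos x)) (rho_line x i)
  have dS : ∀ i x, HasLineDerivAt ℝ (fun x => ∑ j, x j * g j x)
      (g i x + ∑ j, x j * h j i x) x (e i) := fun i x => by
    have := lsum (fun j => lmul (line_coord x i j) (dg j i x))
    simpa [Finset.sum_add_distrib] using this
  have dN : ∀ i x, HasLineDerivAt ℝ (fun x => ∑ j, g j x ^ 2)
      (2 * ∑ j, g j x * h j i x) x (e i) := fun i x => by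
    have := lsum (fun j => lmul (dg j i x) (dg j i x))
    simp_rw [← sq] at this
    have e1 : ∑ j, (h j i x * g j x + g j x * h j i x) = 2 * ∑ j, g j x * h j i x := by
      rw [Finset.mul_sum]
      exact Finset.sum_congr rfl fun j _ => by ring
    rwa [e1] at this
  refine gaffney
    (fun i x => 2 * (2 * (g i x * (W t k (rho x) * ∑ j, x j * g j x))
      - x i * (W t k (rho x) * ∑ j, g j x ^ 2)
      + x i * ((lam - V x) * (W t k (rho x) * (u x * u x)))
      + M n t k (rho x) * (u x * g i x)) - W t k (rho x) * (u x * g i x))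
    (fun i x =>
      (4 * W t k (rho x) * (∑ j, x j * g j x) + 2 * M n t k (rho x) * u x
        - W t k (rho x) * u x) * h i i x
      + (8 * W1 t k (rho x) * (∑ j, x j * g j x) + 4 * (lam - V x) * W t k (rho x) * u x
        + 4 * M1 n t k (rho x) * u x - 2 * W1 t k (rho x) * u x) * (x i * g i x)
      + (4 * W t k (rho x) + 2 * M n t k (rho x) - W t k (rho x)) * (g i x ^ 2)
      + 4 * W t k (rho x) * (g i x * ∑ j, x j * h j i x)
      + (-4 * W1 t k (rho x) * (∑ j, g j x ^ 2) + 4 * (lam - V x) * W1 t k (rho x) * u x ^ 2)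
        * (x i ^ 2)
      + (-2 * W t k (rho x) * (∑ j, g j x ^ 2) + 2 * (lam - V x) * W t k (rho x) * u x ^ 2)
      - 4 * W t k (rho x) * (x i * ∑ j, g j x * h j i x)
      - 2 * W t k (rho x) * u x ^ 2 * (v i x * x i))
    (fun i => by fun_prop) (fun i => by fun_prop) (fun i x => ?_)
    (fun x => ((1 / t) ^ k * (6 + 2 * K + 2 * (n + 2 * k) + 1)) * (u x ^ 2 + ∑ j, g j x ^ 2))
    (((hu2.add hN)).const_mul _) (fun i x => ?_)
    _ _ (by fun_prop) (fun x => ?_) (fun x => by positivity) (hu2.const_mul _) (fun x => ?_)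
  · have hc : HasLineDerivAt ℝ (fun y : E n => y i) 1 x (e i) := by
      simpa using line_coord x i i
    have h1 := lmul (lconst 2 x (e i)) (lmul (dg i i x) (lmul (dW i x) (dS i x)))
    have h2 := lmul hc (lmul (dW i x) (dN i x))
    have h3 := lmul hc (lmul (lsub (lconst lam x (e i)) (dV i x))
      (lmul (dW i x) (lmul (du i x) (du i x))))
    have h4 := lmul (dM i x) (lmul (du i x) (dg i i x))
    have h5 := lmul (dW i x) (lmul (du i x) (dg i i x))
    have h6 := lsub (lmul (lconst 2 x (e i)) (ladd (ladd (lsub h1 h2) h3) h4)) h5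
    refine HasDerivAt.congr_deriv h6 ?_
    ring
  · have hK0 : 0 ≤ K := (abs_nonneg _).trans (hK x)
    exact F_bound x i (fun j => g j x) _ _ _ _ _ _ hK0 (by positivity)
      (W_nonneg t ht k _ (rho_pos x)) (W_le' t ht k _ (rho_pos x))
      (M_nonneg n t ht k _ (rho_ge x)) (M_le n t ht k _ (rho_ge x))
      (by rw [abs_sub_comm]; exact hK x)
  · have := W_nonneg t ht k _ (rho_pos x)
    positivity
  · have hr := rho_pos x
    have key := alg_bound (W t k (rho x)) (W1 t k (rho x)) (M1 n t k (rho x)) (rho x) (u x)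
      (∑ j, x j * g j x) (∑ j, g j x ^ 2) (∑ i, v i x * x i) (V x) lam
      ((k : ℝ) * (n + 2 * k) + 2 * k) k K2 (rho_ge x) (W_nonneg t ht k _ hr)
      (W1_nonneg t ht k _ hr) (by rw [← mul_div_assoc]; exact W1_le t ht k _ hr)
      (M1_le n t ht k _ (rho_ge x))
      ((cs_bound x (fun j => g j x)).trans (by
        have h0 : 0 ≤ ∑ j, g j x ^ 2 := Finset.sum_nonneg fun j _ => sq_nonneg _
        gcongr
        unfold rho; linarith))
      (hK2 x _ (W_nonneg t ht k _ hr) (W_le t ht k _ hr))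
    refine key.trans (le_of_eq ?_)
    have swap : ∑ i, g i x * ∑ j, x j * h j i x = ∑ i, x i * ∑ j, g j x * h j i x := by
      simp_rw [Finset.mul_sum]
      rw [Finset.sum_comm]
      refine Finset.sum_congr rfl fun i _ => Finset.sum_congr rfl fun j _ => ?_
      rw [sym i j]; ring
    have hxx : ∑ i, x i ^ 2 = rho x - 1 := by rw [← normsq_eq]; unfold rho; ring
    simp only [Finset.sum_sub_distrib, Finset.sum_add_distrib, ← Finset.mul_sum]
    rw [swap, eqn, hxx, M_eq]
    simp only [Finset.sum_const, Finset.card_univ, Fintype.card_fin, nsmul_eq_mul]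
    ring

lemma W_tendsto (k : ℕ) (r : ℝ) :
    Tendsto (fun j : ℕ => W (1 / ((j : ℝ) + 1)) k r) atTop (𝓝 (r ^ k)) := by
  unfold W
  have h1 : Tendsto (fun j : ℕ => 1 / ((j : ℝ) + 1)) atTop (𝓝 0) :=
    tendsto_one_div_add_atTop_nhds_zero_nat
  have h2 : Tendsto (fun j : ℕ => 1 + 1 / ((j : ℝ) + 1) * r) atTop (𝓝 1) := by
    simpa using (h1.mul_const r).const_add 1
  have h3 := ((tendsto_const_nhds (x := r)).div h2 one_ne_zero).pow k
  simpa using h3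

lemma exists_K2 {n : ℕ} (k : ℕ) (δ : ℝ) (hδ : 0 < δ) (lam : ℝ) (hlam : 0 < lam) (D C : ℝ)
    (hD : 0 ≤ D) (hC : 0 ≤ C) (φ : E n → ℝ) (φ0 : ∀ x, 0 ≤ φ x)
    (hφ : ∀ x, φ x ≤ D * (1 + ‖x‖) ^ (-δ)) :
    ∃ K2, 0 ≤ K2 ∧ ∀ x w, 0 ≤ w → w ≤ rho x ^ k → w * (φ x + C / rho x) ≤ lam / 2 * w + K2 := by
  have l1 : Tendsto (fun y : ℝ => D * (1 + y) ^ (-δ) + C / (1 + y ^ 2)) atTop (𝓝 0) := by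
    have a1 : Tendsto (fun y : ℝ => (1 + y) ^ (-δ)) atTop (𝓝 0) :=
      (tendsto_rpow_neg_atTop hδ).comp (tendsto_atTop_add_const_left _ _ tendsto_id)
    have a2 : Tendsto (fun y : ℝ => C / (1 + y ^ 2)) atTop (𝓝 0) :=
      tendsto_const_nhds.div_atTop
        (tendsto_atTop_add_const_left _ _ (tendsto_pow_atTop two_ne_zero))
    simpa using (a1.const_mul D).add a2
  obtain ⟨R, hR⟩ := eventually_atTop.1 (l1.eventually (gt_mem_nhds (by positivity : 0 < lam / 2)))
  refine ⟨(D + C) * (1 + R ^ 2) ^ k, by positivity, fun x w w0 hw => ?_⟩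
  rcases le_or_gt R ‖x‖ with h | h
  · have h1 := hR _ h
    have h2 : φ x + C / rho x ≤ lam / 2 := by
      have := hφ x
      unfold rho
      linarith
    have h3 : 0 ≤ (D + C) * (1 + R ^ 2) ^ k := by positivity
    nlinarith [mul_le_mul_of_nonneg_left h2 w0]
  · have h1 : w ≤ (1 + R ^ 2) ^ k := by
      refine hw.trans ?_
      unfold rho
      gcongr
    have h2 : φ x + C / rho x ≤ D + C := by
      have a1 : (1 + ‖x‖) ^ (-δ) ≤ 1 :=
        Real.rpow_le_one_of_one_le_of_nonpos (by linarith [norm_nonneg x]) (by linarith)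
      have a2 : C / rho x ≤ C := div_le_self hC (rho_ge x)
      have a3 := mul_le_mul_of_nonneg_left a1 hD
      linarith [hφ x]
    have h3 : 0 ≤ φ x + C / rho x := add_nonneg (φ0 x) (div_nonneg hC (rho_pos x).le)
    have h4 : w * (φ x + C / rho x) ≤ (1 + R ^ 2) ^ k * (D + C) := by gcongr
    have h5 : 0 ≤ lam / 2 * w := by positivity
    linarith

lemma real_case {n : ℕ} (δ : ℝ) (hδ : 0 < δ)
    (V : E n → ℝ) (hV : ContDiff ℝ (⊤ : ℕ∞) V)
    (hdecay : ∀ k : ℕ, ∃ C : ℝ, ∀ x,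
      ‖iteratedFDeriv ℝ k V x‖ ≤ C * (1 + ‖x‖) ^ (-(δ + (k:ℝ))))
    (lam : ℝ) (hlam : 0 < lam)
    (ψ : E n → ℂ) (hψ : ContDiff ℝ (⊤ : ℕ∞) ψ)
    (heq : ∀ x, -lap ψ x + (V x : ℂ) * ψ x = (lam : ℂ) * ψ x)
    (L : ℂ →L[ℝ] ℝ) (hL : Integrable (fun x => L (ψ x) ^ 2)) (k : ℕ) :
    Integrable (fun x => rho x ^ k * L (ψ x) ^ 2) := by
  obtain ⟨C0, hC0⟩ := hdecay 0
  obtain ⟨C1, hC1⟩ := hdecay 1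
  simp only [norm_iteratedFDeriv_zero, norm_iteratedFDeriv_one, Real.norm_eq_abs,
    Nat.cast_zero, add_zero, Nat.cast_one] at hC0 hC1
  have C00 : 0 ≤ C0 := by
    have := (abs_nonneg _).trans (hC0 0)
    simpa using this
  have C10 : 0 ≤ C1 := by
    have := (norm_nonneg _).trans (hC1 0)
    simpa using this
  have Vd : Differentiable ℝ V := hV.differentiable (by simp)
  have ψd : Differentiable ℝ ψ := hψ.differentiable (by simp)
  have ψ1 : ContDiff ℝ (⊤ : ℕ∞) (fderiv ℝ ψ) := hψ.fderiv_right (by simp)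
  have ψ1d : Differentiable ℝ (fderiv ℝ ψ) := ψ1.differentiable (by simp)
  have ψ2 : ContDiff ℝ (⊤ : ℕ∞) (fderiv ℝ (fderiv ℝ ψ)) := ψ1.fderiv_right (by simp)
  have V1 : ContDiff ℝ (⊤ : ℕ∞) (fderiv ℝ V) := hV.fderiv_right (by simp)
  have second : ∀ (j : Fin n) (x : E n), HasFDerivAt (fun y => fderiv ℝ ψ y (e j))
      ((fderiv ℝ (fderiv ℝ ψ) x).flip (e j)) x := fun j x => by
    have := (ψ1d x).hasFDerivAt.clm_apply (hasFDerivAt_const (e j) x)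
    simpa using this
  have hT : ∀ x : E n, ∑ i, fderiv ℝ V x (e i) * x i = fderiv ℝ V x x := fun x => by
    have hx : x = ∑ i, x i • (e i : E n) := by
      ext j; simp [Pi.single_apply]
    have h1 := congrArg (fderiv ℝ V x) hx
    rw [h1, map_sum]
    refine Finset.sum_congr rfl fun i _ => ?_
    rw [map_smul, smul_eq_mul, mul_comm]
  obtain ⟨K2, hK20, hK2⟩ := exists_K2 (n := n) k δ hδ lam hlam (2 * C1 + C0)
    (4 * ((k : ℝ) * (n + 2 * k) + 2 * k) ^ 2 + (k : ℝ) ^ 2) (by positivity) (by positivity)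
    (fun x => 2 * |∑ i, fderiv ℝ V x (e i) * x i| + |V x|) (fun x => by positivity)
    (fun x => by
      have hp : 0 < 1 + ‖x‖ := by positivity
      have h1 : |∑ i, fderiv ℝ V x (e i) * x i| ≤ C1 * (1 + ‖x‖) ^ (-δ) := by
        rw [hT, ← Real.norm_eq_abs]
        calc _ ≤ ‖fderiv ℝ V x‖ * ‖x‖ := ContinuousLinearMap.le_opNorm _ _
          _ ≤ (C1 * (1 + ‖x‖) ^ (-(δ + 1))) * (1 + ‖x‖) := by
            gcongr
            · exact hC1 x
            · linarith
          _ = C1 * (1 + ‖x‖) ^ (-δ) := by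
            rw [mul_assoc, ← Real.rpow_add_one hp.ne']
            congr 2; ring
      have h2 := hC0 x
      linarith)
  have hVb : ∀ x, |V x - lam| ≤ C0 + lam := fun x => by
    have a1 : (1 + ‖x‖) ^ (-δ) ≤ 1 :=
      Real.rpow_le_one_of_one_le_of_nonpos (by linarith [norm_nonneg x]) (by linarith)
    have a2 := mul_le_mul_of_nonneg_left a1 C00
    have a3 := abs_sub (V x) lam
    have a4 := hC0 x
    rw [abs_of_pos hlam] at a3
    linarith
  have main := fun (t : ℝ) (ht : 0 < t) => core k t ht (fun x => L (ψ x)) V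
    (fun i x => L (fderiv ℝ ψ x (e i))) (fun i x => fderiv ℝ V x (e i))
    (fun j i x => L (fderiv ℝ (fderiv ℝ ψ) x (e i) (e j))) lam (C0 + lam) K2 hlam hK20
    (L.continuous.comp hψ.continuous) hV.continuous
    (fun i => by have := ψ1.continuous; fun_prop) (fun i => by have := V1.continuous; fun_prop)
    (fun i j => by have := ψ2.continuous; fun_prop)
    (fun i x => (L.hasFDerivAt.comp x (ψd x).hasFDerivAt).hasLineDerivAt (e i))
    (fun i x => (Vd x).hasFDerivAt.hasLineDerivAt (e i))
    (fun j i x => (L.hasFDerivAt.comp x (second j x)).hasLineDerivAt (e i))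
    (fun i j x => by
      have := (hψ.contDiffAt (x := x)).isSymmSndFDerivAt
        (by simp only [minSmoothness_of_isRCLikeNormedField]; exact WithTop.coe_le_coe.2 (le_top : (2 : ℕ∞) ≤ ⊤))
      rw [this (e i) (e j)])
    (fun x => by
      have h1 : lap ψ x = (V x - lam : ℝ) • ψ x := by
        rw [Complex.real_smul]
        push_cast
        linear_combination -(heq x)
      have h2 := congrArg L h1
      rw [L.map_smul, smul_eq_mul] at h2
      rw [← h2]
      unfold lap
      rw [map_sum]
      refine Finset.sum_congr rfl fun i _ => ?_
      rw [(second i x).fderiv]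
      rfl)
    hVb hL (fun x w w0 hw => by simpa only using hK2 x w w0 hw)
  have := (fatou (fun j x => lam / 2 * W (1 / ((j : ℝ) + 1)) k (rho x) * L (ψ x) ^ 2)
    (fun x => lam / 2 * rho x ^ k * L (ψ x) ^ 2) (fun _ => ∫ x, K2 * L (ψ x) ^ 2) _
    (fun j => (main _ (by positivity)).1)
    (fun j x => by
      have := W_nonneg (1 / ((j : ℝ) + 1)) (by positivity) k _ (rho_pos x)
      positivity)
    (fun x => ((W_tendsto k (rho x)).const_mul _).mul_const _)
    (fun j => (main _ (by positivity)).2) tendsto_const_nhds).1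
  refine (this.const_mul (2 / lam)).congr (Eventually.of_forall fun x => ?_)
  simp only
  field_simp

end PosComm

/-- Euclidean instance of Proposition 5.9: superpolynomial decay of positive-energy
`L²` eigenfunctions of `-Δ + V`, `V` of symbolic decay order `-δ`. -/
theorem stmt_11 (n : ℕ) (hn : 1 ≤ n) (δ : ℝ) (hδ : 0 < δ)
    (V : EuclideanSpace ℝ (Fin n) → ℝ) (hV : ContDiff ℝ (⊤ : ℕ∞) V)
    (hdecay : ∀ k : ℕ, ∃ C : ℝ, ∀ x,
      ‖iteratedFDeriv ℝ k V x‖ ≤ C * (1 + ‖x‖) ^ (-(δ + (k:ℝ))))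
    (lam : ℝ) (hlam : 0 < lam)
    (ψ : EuclideanSpace ℝ (Fin n) → ℂ) (hψ : ContDiff ℝ (⊤ : ℕ∞) ψ)
    (hL2 : Integrable (fun x => ‖ψ x‖^2))
    (heq : ∀ x, -lap ψ x + (V x : ℂ) * ψ x = (lam : ℂ) * ψ x) :
    ∀ β : ℝ, Integrable (fun x => (1 + ‖x‖) ^ (2*β) * ‖ψ x‖^2) := by
  intro β
  obtain ⟨k, hk⟩ := exists_nat_ge β
  have hsq : ∀ x, ‖ψ x‖ ^ 2 = (ψ x).re ^ 2 + (ψ x).im ^ 2 := fun x => by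
    rw [← Complex.normSq_eq_norm_sq, Complex.normSq_apply]; ring
  have cψ := hψ.continuous
  have ire : Integrable (fun x => Complex.reCLM (ψ x) ^ 2) := by
    refine Integrable.mono' hL2 (by fun_prop) (Filter.Eventually.of_forall fun x => ?_)
    rw [hsq, Real.norm_eq_abs, abs_of_nonneg (sq_nonneg _), Complex.reCLM_apply]
    linarith [sq_nonneg (ψ x).im]
  have iim : Integrable (fun x => Complex.imCLM (ψ x) ^ 2) := by
    refine Integrable.mono' hL2 (by fun_prop) (Filter.Eventually.of_forall fun x => ?_)
    rw [hsq, Real.norm_eq_abs, abs_of_nonneg (sq_nonneg _), Complex.imCLM_apply]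
    linarith [sq_nonneg (ψ x).re]
  have h1 := PosComm.real_case δ hδ V hV hdecay lam hlam ψ hψ heq Complex.reCLM ire k
  have h2 := PosComm.real_case δ hδ V hV hdecay lam hlam ψ hψ heq Complex.imCLM iim k
  refine Integrable.mono' ((h1.add h2).const_mul (2 ^ k)) ?_
    (Filter.Eventually.of_forall fun x => ?_)
  · refine Continuous.aestronglyMeasurable ?_
    refine Continuous.mul (Continuous.rpow_const (by fun_prop) fun x => Or.inl ?_) (by fun_prop)
    positivity
  · have hp : 1 ≤ 1 + ‖x‖ := by linarith [norm_nonneg x]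
    have hb : (1 + ‖x‖) ^ (2 * β) ≤ 2 ^ k * PosComm.rho x ^ k := by
      calc (1 + ‖x‖) ^ (2 * β) ≤ (1 + ‖x‖) ^ (((2 * k : ℕ) : ℝ)) := by
            apply Real.rpow_le_rpow_of_exponent_le hp
            push_cast; linarith
        _ = ((1 + ‖x‖) ^ 2) ^ k := by rw [Real.rpow_natCast, pow_mul]
        _ ≤ (2 * PosComm.rho x) ^ k := by
            gcongr
            unfold PosComm.rho
            nlinarith [sq_nonneg (1 - ‖x‖)]
        _ = _ := mul_pow _ _ _
    rw [Real.norm_eq_abs, abs_of_nonneg (by positivity)]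
    calc (1 + ‖x‖) ^ (2 * β) * ‖ψ x‖ ^ 2 ≤ (2 ^ k * PosComm.rho x ^ k) * ‖ψ x‖ ^ 2 := by gcongr
      _ = _ := by
        rw [hsq]
        simp only [Pi.add_apply, Complex.reCLM_apply, Complex.imCLM_apply]
        ring
end

section
/- Let n ≥ 1, δ > 0, and let V : ℝⁿ → ℝ be a smooth potential of symbolic decay order −δ: for every multi-index α there is a constant C_α such that |∂^α V(x)| ≤ C_α (1+|x|)^{−δ−|α|} for all x ∈ ℝⁿ. Let λ ∈ ℝ be arbitrary and let ψ : ℝⁿ → ℂ be smooth with −Δψ + Vψ = λψ on ℝⁿ (Δ = Σᵢ ∂²/∂xᵢ²), and suppose that for every α ∈ ℝ one has ∫_{ℝⁿ} e^{2α|x|} |ψ(x)|² dx < ∞. Then ψ ≡ 0. -/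
open MeasureTheory


namespace UC

abbrev E (n : ℕ) := EuclideanSpace ℝ (Fin n)

def Sm {n : ℕ} (f : E n → ℝ) : Prop := ContDiff ℝ (⊤ : ℕ∞) f

noncomputable def D {n : ℕ} (i : Fin n) (f : E n → ℝ) : E n → ℝ :=
  fun x => fderiv ℝ f x (EuclideanSpace.single i 1)

theorem Sm.cont {n : ℕ} {f : E n → ℝ} (h : Sm f) : Continuous f := ContDiff.continuous h

theorem Sm.diff {n : ℕ} {f : E n → ℝ} (h : Sm f) (x : E n) : DifferentiableAt ℝ f x :=
  (ContDiff.differentiable h (by simp)) x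

theorem Sm.D {n : ℕ} {f : E n → ℝ} (h : Sm f) (i : Fin n) : Sm (D i f) := by
  have h1 : ContDiff ℝ (⊤ : ℕ∞) (fderiv ℝ f) := ContDiff.fderiv_right (m := (⊤ : ℕ∞)) h (by simp)
  exact h1.clm_apply contDiff_const

theorem Sm.mul {n : ℕ} {f g : E n → ℝ} (hf : Sm f) (hg : Sm g) : Sm (fun x => f x * g x) :=
  ContDiff.mul hf hg
theorem Sm.add {n : ℕ} {f g : E n → ℝ} (hf : Sm f) (hg : Sm g) : Sm (fun x => f x + g x) :=
  ContDiff.add hf hg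
theorem Sm.sub {n : ℕ} {f g : E n → ℝ} (hf : Sm f) (hg : Sm g) : Sm (fun x => f x - g x) :=
  ContDiff.sub hf hg
theorem Sm.const {n : ℕ} (c : ℝ) : Sm (fun _ : E n => c) := contDiff_const
theorem Sm.sum {n : ℕ} {ι : Type} {s : Finset ι} {f : ι → E n → ℝ} (hf : ∀ j, Sm (f j)) :
    Sm (fun x => ∑ j ∈ s, f j x) := ContDiff.sum (fun j _ => hf j)
theorem Sm.exp {n : ℕ} {f : E n → ℝ} (hf : Sm f) : Sm (fun x => Real.exp (f x)) :=
  ContDiff.exp hf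
theorem Sm.coord {n : ℕ} (i : Fin n) : Sm (fun x : E n => x i) :=
  (EuclideanSpace.proj (𝕜 := ℝ) i).contDiff

theorem D_mul {n : ℕ} {f g : E n → ℝ} (hf : Sm f) (hg : Sm g) (i : Fin n) (x : E n) :
    D i (fun x => f x * g x) x = D i f x * g x + f x * D i g x := by
  simp only [D]
  rw [fderiv_fun_mul (hf.diff x) (hg.diff x)]
  simp; ring
theorem D_add {n : ℕ} {f g : E n → ℝ} (hf : Sm f) (hg : Sm g) (i : Fin n) (x : E n) :
    D i (fun x => f x + g x) x = D i f x + D i g x := by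
  simp only [D]
  rw [fderiv_fun_add (hf.diff x) (hg.diff x)]
  simp
theorem D_sub {n : ℕ} {f g : E n → ℝ} (hf : Sm f) (hg : Sm g) (i : Fin n) (x : E n) :
    D i (fun x => f x - g x) x = D i f x - D i g x := by
  simp only [D]
  rw [fderiv_fun_sub (hf.diff x) (hg.diff x)]
  simp
theorem D_const {n : ℕ} (c : ℝ) (i : Fin n) (x : E n) : D i (fun _ : E n => c) x = 0 := by
  simp [D]
theorem D_cmul {n : ℕ} {f : E n → ℝ} (hf : Sm f) (c : ℝ) (i : Fin n) (x : E n) :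
    D i (fun x => c * f x) x = c * D i f x := by
  rw [D_mul (Sm.const c) hf, D_const]; ring
theorem D_sum {n : ℕ} {ι : Type} {s : Finset ι} {f : ι → E n → ℝ} (hf : ∀ j, Sm (f j))
    (i : Fin n) (x : E n) :
    D i (fun x => ∑ j ∈ s, f j x) x = ∑ j ∈ s, D i (f j) x := by
  simp only [D]
  rw [fderiv_fun_sum (fun j _ => (hf j).diff x)]
  simp
theorem D_exp {n : ℕ} {f : E n → ℝ} (hf : Sm f) (i : Fin n) (x : E n) :
    D i (fun x => Real.exp (f x)) x = Real.exp (f x) * D i f x := by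
  simp only [D]
  rw [fderiv_exp (hf.diff x)]
  simp
theorem D_coord {n : ℕ} (i j : Fin n) (x : E n) :
    D i (fun x : E n => x j) x = if i = j then 1 else 0 := by
  have : (fun x : E n => x j) = (EuclideanSpace.proj (𝕜 := ℝ) j) := rfl
  simp only [D]
  rw [this, ContinuousLinearMap.fderiv]
  simp [eq_comm]
theorem D_symm {n : ℕ} {f : E n → ℝ} (hf : Sm f) (i j : Fin n) (x : E n) :
    D i (D j f) x = D j (D i f) x := by
  have h := (ContDiff.contDiffAt (x := x) hf).isSymmSndFDerivAt (by simp; exact WithTop.coe_le_coe.2 (le_top : (2 : ℕ∞) ≤ ⊤))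
  have h1 : ContDiff ℝ (⊤ : ℕ∞) (fderiv ℝ f) := ContDiff.fderiv_right (m := (⊤ : ℕ∞)) hf (by simp)
  have h2 : DifferentiableAt ℝ (fderiv ℝ f) x := h1.differentiable (by simp) x
  have key : ∀ i j : Fin n, D i (D j f) x =
      fderiv ℝ (fderiv ℝ f) x (EuclideanSpace.single i 1) (EuclideanSpace.single j 1) := by
    intro i j
    have e : D j f = fun y => fderiv ℝ f y (EuclideanSpace.single j 1) := rfl
    rw [e]
    simp only [D]
    rw [fderiv_clm_apply h2 (by fun_prop)]
    simp
  rw [key, key]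
  exact h _ _

/-- integral of a derivative of compactly supported smooth function vanishes -/
theorem int_D {n : ℕ} {f : E n → ℝ} (hf : Sm f) (hc : HasCompactSupport f) (i : Fin n) :
    Integrable (D i f) ∧ ∫ x, D i f x = 0 := by
  have hD : Integrable (D i f) := by
    refine (hf.D i).cont.integrable_of_hasCompactSupport ?_
    exact hc.fderiv_apply (𝕜 := ℝ) _
  refine ⟨hD, ?_⟩
  have hi : Integrable f := hf.cont.integrable_of_hasCompactSupport hc
  have := integral_mul_fderiv_eq_neg_fderiv_mul_of_integrable (μ := (volume : Measure (E n)))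
    (f := fun _ : E n => (1:ℝ)) (g := f) (v := EuclideanSpace.single i 1)
    (by simp) (by simp only [one_mul]; exact hD) (by simpa using hi) (by simp) (fun x _ => hf.diff x)
  simpa [D] using this

/-- cutoffs -/
theorem cutoffs (n : ℕ) : ∃ (χ : ℝ → E n → ℝ) (M : ℝ), 0 ≤ M ∧
    (∀ R, 1 ≤ R → Sm (χ R) ∧ HasCompactSupport (χ R) ∧ (∀ x, 0 ≤ χ R x) ∧ (∀ x, χ R x ≤ 1) ∧
      (∀ x, ‖x‖ ≤ R → χ R x = 1) ∧ (∀ x, 2 * R ≤ ‖x‖ → χ R x = 0) ∧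
      (∀ i x, |D i (χ R) x| ≤ M / R) ∧ (∀ i x, |D i (D i (χ R)) x| ≤ M)) := by
  let f : ContDiffBump (0 : E n) := ⟨1, 2, by norm_num, by norm_num⟩
  have hf : Sm (fun x => f x) := f.contDiff
  have hfc : HasCompactSupport (fun x => f x) := f.hasCompactSupport
  have b1 : ∀ i : Fin n, ∃ M, ∀ x, |D i (fun x => f x) x| ≤ M := fun i =>
    HasCompactSupport.exists_bound_of_continuous (hfc.fderiv_apply (𝕜 := ℝ) _) (hf.D i).cont
  have b2 : ∀ i : Fin n, ∃ M, ∀ x, |D i (D i (fun x => f x)) x| ≤ M := fun i =>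
    HasCompactSupport.exists_bound_of_continuous
      (HasCompactSupport.fderiv_apply (𝕜 := ℝ) (hfc.fderiv_apply (𝕜 := ℝ) _) _) ((hf.D i).D i).cont
  choose M1 hM1 using b1
  choose M2 hM2 using b2
  have dil : ∀ (g : E n → ℝ) (_ : Sm g) (c : ℝ) (i : Fin n) (x : E n),
      D i (fun x => g (c • x)) x = c * D i g (c • x) := by
    intro g hg c i x
    simp only [D]
    have h1 : HasFDerivAt (fun x : E n => c • x) (c • ContinuousLinearMap.id ℝ (E n)) x :=
      (hasFDerivAt_id x).const_smul c
    have h2 := (hg.diff (c • x)).hasFDerivAt.comp x h1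
    have h3 : fderiv ℝ (fun x => g (c • x)) x = _ := h2.fderiv
    rw [h3]
    simp
  refine ⟨fun R x => f (R⁻¹ • x), ∑ i, |M1 i| + ∑ i, |M2 i|, by positivity, ?_⟩
  intro R hR
  have hR0 : 0 < R := by linarith
  have hs : Sm (fun x => f (R⁻¹ • x)) := ContDiff.comp (g := f) f.contDiff (by fun_prop)
  have hle1 : ∀ i x, |D i (fun x => f x) x| ≤ ∑ i, |M1 i| + ∑ i, |M2 i| := by
    intro i x
    have h1 := Finset.single_le_sum (f := fun i => |M1 i|) (fun i _ => abs_nonneg _)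
      (Finset.mem_univ i)
    have h2 : 0 ≤ ∑ i, |M2 i| := by positivity
    have := hM1 i x
    have := le_abs_self (M1 i)
    linarith
  have hle2 : ∀ i x, |D i (D i (fun x => f x)) x| ≤ ∑ i, |M1 i| + ∑ i, |M2 i| := by
    intro i x
    have h1 := Finset.single_le_sum (f := fun i => |M2 i|) (fun i _ => abs_nonneg _)
      (Finset.mem_univ i)
    have h2 : 0 ≤ ∑ i, |M1 i| := by positivity
    have := hM2 i x
    have := le_abs_self (M2 i)
    linarith
  have hn : ∀ x : E n, ‖R⁻¹ • x‖ = ‖x‖ / R := by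
    intro x
    rw [norm_smul, norm_inv, Real.norm_of_nonneg hR0.le]; field_simp
  refine ⟨hs, ?_, fun x => f.nonneg, fun x => f.le_one, ?_, ?_, ?_, ?_⟩
  · exact hfc.comp_smul (by positivity)
  · intro x hx
    refine f.one_of_mem_closedBall ?_
    simp only [mem_closedBall_zero_iff]
    rw [hn, div_le_iff₀ hR0]
    show ‖x‖ ≤ 1 * R
    linarith
  · intro x hx
    refine f.zero_of_le_dist ?_
    rw [dist_zero_right, hn, le_div_iff₀ hR0]
    exact hx
  · intro i x
    rw [dil _ hf, abs_mul, abs_of_pos (by positivity : 0 < R⁻¹), div_eq_inv_mul]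
    exact mul_le_mul_of_nonneg_left (hle1 _ _) (by positivity)
  · intro i x
    have e1 : D i (fun x => f (R⁻¹ • x)) = fun x => R⁻¹ * D i (fun x => f x) (R⁻¹ • x) := by
      funext y; rw [dil _ hf]
    have hs2 : Sm (fun x => D i (fun x => f x) (R⁻¹ • x)) :=
      ContDiff.comp (g := D i (fun x => f x)) (hf.D i) (by fun_prop)
    rw [e1, D_cmul hs2, dil _ (hf.D i), abs_mul, abs_mul, abs_of_pos (by positivity : 0 < R⁻¹)]
    have h1 : R⁻¹ ≤ 1 := inv_le_one_of_one_le₀ hR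
    have h3 := hle2 i (R⁻¹ • x)
    have h4 : R⁻¹ * |D i (D i (fun x => f x)) (R⁻¹ • x)| ≤ |D i (D i (fun x => f x)) (R⁻¹ • x)| := 
      mul_le_of_le_one_left (abs_nonneg _) h1
    have h5 := mul_le_of_le_one_left
      (mul_nonneg (by positivity : 0 ≤ R⁻¹) (abs_nonneg (D i (D i (fun x => f x)) (R⁻¹ • x)))) h1
    linarith

theorem alg {n : ℕ} (v L q t : ℝ) (a Φ Li LL qi : Fin n → ℝ) (H P : Fin n → Fin n → ℝ)
    (hH : ∀ i j, H i j = H j i) (hL : L = ∑ i, P i i)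
    (hEq : ∑ i, H i i = 2 * t * ∑ i, Φ i * a i + t * L * v + q * v) :
    ∑ i, (2 * (H i i * (∑ j, Φ j * a j) + a i * ∑ j, (P i j * a j + Φ j * H i j))
      - (P i i * (∑ j, a j * a j) + Φ i * ∑ j, (H i j * a j + a j * H i j))
      + (H i i * (L * v) + a i * (Li i * v + L * a i))
      - 1 / 2 * ((a i * v + v * a i) * Li i + (v * v) * LL i)
      - ((qi i * Φ i + q * P i i) * (v * v) + (q * Φ i) * (a i * v + v * a i)))
    = t * (2 * ∑ i, Φ i * a i + L * v) ^ 2 + 2 * ∑ i, ∑ j, a i * P i j * a j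
      - 1 / 2 * v ^ 2 * ∑ i, LL i - v ^ 2 * ∑ i, Φ i * qi i := by
  have hsw : ∑ i, Φ i * ∑ j, (H i j * a j + a j * H i j)
      = 2 * ∑ i, a i * ∑ j, Φ j * H i j := by
    simp only [Finset.mul_sum]
    rw [Finset.sum_comm]
    refine Finset.sum_congr rfl fun i _ => Finset.sum_congr rfl fun j _ => ?_
    rw [hH j i]; ring
  have h1 : ∑ i, (a i * ∑ j, (P i j * a j + Φ j * H i j))
      = ∑ i, ∑ j, a i * P i j * a j + ∑ i, a i * ∑ j, Φ j * H i j := by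
    rw [← Finset.sum_add_distrib]
    refine Finset.sum_congr rfl fun i _ => ?_
    rw [Finset.sum_add_distrib, mul_add, Finset.mul_sum]
    congr 1
    refine Finset.sum_congr rfl fun j _ => by ring
  set T := ∑ j, Φ j * a j with hT
  set N := ∑ j, a j * a j with hN
  have e : ∀ i, (2 * (H i i * T + a i * ∑ j, (P i j * a j + Φ j * H i j))
      - (P i i * N + Φ i * ∑ j, (H i j * a j + a j * H i j))
      + (H i i * (L * v) + a i * (Li i * v + L * a i))
      - 1 / 2 * ((a i * v + v * a i) * Li i + (v * v) * LL i)
      - ((qi i * Φ i + q * P i i) * (v * v) + (q * Φ i) * (a i * v + v * a i)))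
    = (2 * T + L * v) * H i i + 2 * (a i * ∑ j, (P i j * a j + Φ j * H i j))
      - (N + q * (v * v)) * P i i - Φ i * ∑ j, (H i j * a j + a j * H i j)
      + L * (a i * a i) - 1 / 2 * v ^ 2 * LL i - v ^ 2 * (Φ i * qi i)
      - 2 * q * v * (Φ i * a i) := by
    intro i; ring
  rw [Finset.sum_congr rfl fun i _ => e i]
  simp only [Finset.sum_add_distrib, Finset.sum_sub_distrib, ← Finset.mul_sum] at hsw h1 ⊢
  rw [hsw, h1, hEq, ← hL, ← hT, ← hN]
  ring

noncomputable def FF {n : ℕ} (v L q : E n → ℝ) (Φ : Fin n → E n → ℝ) (i : Fin n) : E n → ℝ :=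
  fun x => 2 * (D i v x * ∑ j, Φ j x * D j v x) - Φ i x * (∑ j, D j v x * D j v x)
    + D i v x * (L x * v x) - 1 / 2 * ((v x * v x) * D i L x) - (q x * Φ i x) * (v x * v x)

theorem Sm_FF {n : ℕ} {v L q : E n → ℝ} {Φ : Fin n → E n → ℝ} (hv : Sm v) (hL : Sm L)
    (hq : Sm q) (hΦ : ∀ i, Sm (Φ i)) (i : Fin n) : Sm (FF v L q Φ i) := by
  have h1 : Sm (fun x => ∑ j, Φ j x * D j v x) := Sm.sum fun j => (hΦ j).mul (hv.D j)
  have h2 : Sm (fun x => ∑ j, D j v x * D j v x) := Sm.sum fun j => (hv.D j).mul (hv.D j)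
  exact (((((Sm.const 2).mul ((hv.D i).mul h1)).sub ((hΦ i).mul h2)).add
    ((hv.D i).mul (hL.mul hv))).sub ((Sm.const (1/2)).mul ((hv.mul hv).mul (hL.D i)))).sub
    ((hq.mul (hΦ i)).mul (hv.mul hv))

theorem D_FF {n : ℕ} {v L q : E n → ℝ} {Φ : Fin n → E n → ℝ} (hv : Sm v) (hL : Sm L)
    (hq : Sm q) (hΦ : ∀ i, Sm (Φ i)) (i : Fin n) (x : E n) : D i (FF v L q Φ i) x =
    2 * (D i (D i v) x * (∑ j, Φ j x * D j v x) + D i v x *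
        ∑ j, (D i (Φ j) x * D j v x + Φ j x * D i (D j v) x))
      - (D i (Φ i) x * (∑ j, D j v x * D j v x) + Φ i x * ∑ j, (D i (D j v) x * D j v x
        + D j v x * D i (D j v) x))
      + (D i (D i v) x * (L x * v x) + D i v x * (D i L x * v x + L x * D i v x))
      - 1 / 2 * ((D i v x * v x + v x * D i v x) * D i L x + (v x * v x) * D i (D i L) x)
      - ((D i q x * Φ i x + q x * D i (Φ i) x) * (v x * v x)
        + (q x * Φ i x) * (D i v x * v x + v x * D i v x)) := by
  have h1 : Sm (fun x => ∑ j, Φ j x * D j v x) := Sm.sum fun j => (hΦ j).mul (hv.D j)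
  have h2 : Sm (fun x => ∑ j, D j v x * D j v x) := Sm.sum fun j => (hv.D j).mul (hv.D j)
  have s1 := ((Sm.const 2).mul ((hv.D i).mul h1))
  have s2 := ((hΦ i).mul h2)
  have s3 := ((hv.D i).mul (hL.mul hv))
  have s4 := ((Sm.const (1/2)).mul ((hv.mul hv).mul (hL.D i)))
  have s5 := ((hq.mul (hΦ i)).mul (hv.mul hv))
  unfold FF
  rw [D_sub (((s1.sub s2).add s3).sub s4) s5, D_sub ((s1.sub s2).add s3) s4,
    D_add (s1.sub s2) s3, D_sub s1 s2, D_cmul ((hv.D i).mul h1), D_mul (hv.D i) h1,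
    D_mul (hΦ i) h2, D_mul (hv.D i) (hL.mul hv), D_mul hL hv,
    D_cmul ((hv.mul hv).mul (hL.D i)), D_mul (hv.mul hv) (hL.D i), D_mul hv hv,
    D_mul (hq.mul (hΦ i)) (hv.mul hv), D_mul hq (hΦ i), D_mul hv hv,
    D_sum (fun j => (hΦ j).mul (hv.D j)), D_sum (fun j => (hv.D j).mul (hv.D j))]
  have e1 : ∀ j, D i (fun x => Φ j x * D j v x) x = D i (Φ j) x * D j v x + Φ j x * D i (D j v) x :=
    fun j => D_mul (hΦ j) (hv.D j) i x
  have e2 : ∀ j, D i (fun x => D j v x * D j v x) x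
      = D i (D j v) x * D j v x + D j v x * D i (D j v) x :=
    fun j => D_mul (hv.D j) (hv.D j) i x
  simp only [e1, e2]

theorem div_FF {n : ℕ} {v L q : E n → ℝ} {Φ : Fin n → E n → ℝ} (hv : Sm v) (hL : Sm L)
    (hq : Sm q) (hΦ : ∀ i, Sm (Φ i)) (t : ℝ) (hLΦ : ∀ x, L x = ∑ i, D i (Φ i) x)
    (hEq : ∀ x, ∑ i, D i (D i v) x = 2 * t * ∑ i, Φ i x * D i v x + t * L x * v x + q x * v x)
    (x : E n) : ∑ i, D i (FF v L q Φ i) x =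
      t * (2 * ∑ i, Φ i x * D i v x + L x * v x) ^ 2
      + 2 * ∑ i, ∑ j, D i v x * D i (Φ j) x * D j v x
      - 1 / 2 * (v x) ^ 2 * ∑ i, D i (D i L) x - (v x) ^ 2 * ∑ i, Φ i x * D i q x := by
  rw [← alg (v x) (L x) (q x) t (fun i => D i v x) (fun i => Φ i x) (fun i => D i L x)
    (fun i => D i (D i L) x) (fun i => D i q x) (fun i j => D i (D j v) x)
    (fun i j => D i (Φ j) x) (fun i j => D_symm hv i j x) (hLΦ x) (hEq x)]
  exact Finset.sum_congr rfl fun i _ => D_FF hv hL hq hΦ i x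

/-- Divergence of a compactly supported field integrates to zero. -/
theorem int_div {n : ℕ} {F : Fin n → E n → ℝ} {χ : E n → ℝ} (hF : ∀ i, Sm (F i)) (hχ : Sm χ)
    (hc : HasCompactSupport χ) :
    ∫ x, χ x * ∑ i, D i (F i) x = - ∫ x, ∑ i, D i χ x * F i x := by
  have hs : ∀ i, HasCompactSupport (fun x => χ x * F i x) := fun i => hc.mul_right
  have h0 : ∀ i, ∫ x, D i (fun x => χ x * F i x) x = 0 := fun i =>
    (int_D (hχ.mul (hF i)) (hs i) i).2
  have h1 : ∫ x, ∑ i, D i (fun x => χ x * F i x) x = 0 := by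
    rw [integral_finsetSum _ fun i _ => (int_D (hχ.mul (hF i)) (hs i) i).1]
    simp [h0]
  have i1 : Integrable (fun x => χ x * ∑ i, D i (F i) x) := by
    refine Continuous.integrable_of_hasCompactSupport ?_ hc.mul_right
    exact (hχ.mul (Sm.sum fun i => (hF i).D i)).cont
  have i2 : Integrable (fun x => ∑ i, D i χ x * F i x) := by
    refine integrable_finsetSum _ fun i _ => ?_
    refine Continuous.integrable_of_hasCompactSupport ((hχ.D i).mul (hF i)).cont ?_
    exact HasCompactSupport.mul_right (hc.fderiv_apply (𝕜 := ℝ) _)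
  rw [eq_neg_iff_add_eq_zero, ← integral_add i1 i2, ← h1]
  congr 1
  funext x
  rw [Finset.mul_sum, ← Finset.sum_add_distrib]
  refine Finset.sum_congr rfl fun i _ => ?_
  rw [D_mul hχ (hF i)]; ring

theorem cacc {n : ℕ} {v L q : E n → ℝ} {Φ : Fin n → E n → ℝ} (hv : Sm v) (hL : Sm L)
    (hq : Sm q) (hΦ : ∀ i, Sm (Φ i)) (t K : ℝ) (hK : 0 ≤ K) (hLΦ : ∀ x, L x = ∑ i, D i (Φ i) x)
    (hEq : ∀ x, ∑ i, D i (D i v) x = 2 * t * ∑ i, Φ i x * D i v x + t * L x * v x + q x * v x)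
    (bΦ : ∀ i x, |Φ i x| ≤ K) (bq : ∀ x, |q x| ≤ K)
    (hint : Integrable (fun x => v x ^ 2)) :
    Integrable (fun x => ∑ i, D i v x * D i v x) := by
  obtain ⟨χ, M, hM, hχ⟩ := cutoffs n
  -- the identity
  have hN : Sm (fun x => ∑ i, D i v x * D i v x) := Sm.sum fun i => (hv.D i).mul (hv.D i)
  have key : ∀ R, 1 ≤ R → ∫ x, χ R x * ∑ i, D i v x * D i v x ≤
      ∫ x, ((n : ℝ) * M + n * (|t| * M * K) + K) * v x ^ 2 := by
    intro R hR
    obtain ⟨hs, hc, h0, h1, -, -, hD1, hD2⟩ := hχ R hR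
    let F : Fin n → E n → ℝ := fun i x => χ R x * (v x * D i v x) - χ R x * (t * (Φ i x * (v x * v x)))
      - 1 / 2 * ((v x * v x) * D i (χ R) x)
    have sF : ∀ i, Sm (F i) := fun i =>
      ((hs.mul (hv.mul (hv.D i))).sub (hs.mul ((Sm.const t).mul ((hΦ i).mul (hv.mul hv))))).sub
        ((Sm.const (1/2)).mul ((hv.mul hv).mul (hs.D i)))
    have cF : ∀ i, HasCompactSupport (F i) := by
      intro i
      refine HasCompactSupport.sub (HasCompactSupport.sub hc.mul_right hc.mul_right) ?_
      refine HasCompactSupport.mul_left (HasCompactSupport.mul_left ?_)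
      exact hc.fderiv_apply (𝕜 := ℝ) _
    have dF : ∀ i x, D i (F i) x = χ R x * (D i v x * D i v x) + χ R x * (v x * D i (D i v) x)
        - t * (χ R x * (D i (Φ i) x * (v x * v x)) + 2 * (χ R x * v x) * (Φ i x * D i v x))
        - t * v x ^ 2 * (D i (χ R) x * Φ i x) - 1 / 2 * v x ^ 2 * D i (D i (χ R)) x := by
      intro i x
      have a1 := (hs.mul (hv.mul (hv.D i)))
      have a2 := (hs.mul ((Sm.const t).mul ((hΦ i).mul (hv.mul hv))))
      have a3 := ((Sm.const (1/2)).mul ((hv.mul hv).mul (hs.D i)))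
      simp only [F]
      rw [D_sub (a1.sub a2) a3, D_sub a1 a2, D_mul hs (hv.mul (hv.D i)), D_mul hv (hv.D i),
        D_mul hs ((Sm.const t).mul ((hΦ i).mul (hv.mul hv))), D_cmul ((hΦ i).mul (hv.mul hv)),
        D_mul (hΦ i) (hv.mul hv), D_cmul ((hv.mul hv).mul (hs.D i)), D_mul (hv.mul hv) (hs.D i),
        D_mul hv hv]
      ring
    have divF : ∀ x, ∑ i, D i (F i) x = χ R x * ∑ i, D i v x * D i v x
        + χ R x * q x * v x ^ 2 - t * v x ^ 2 * (∑ i, D i (χ R) x * Φ i x)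
        - 1 / 2 * v x ^ 2 * ∑ i, D i (D i (χ R)) x := by
      intro x
      rw [Finset.sum_congr rfl fun i _ => dF i x]
      have e : ∀ i, χ R x * (D i v x * D i v x) + χ R x * (v x * D i (D i v) x)
        - t * (χ R x * (D i (Φ i) x * (v x * v x)) + 2 * (χ R x * v x) * (Φ i x * D i v x))
        - t * v x ^ 2 * (D i (χ R) x * Φ i x) - 1 / 2 * v x ^ 2 * D i (D i (χ R)) x =
        χ R x * (D i v x * D i v x) + (χ R x * v x) * D i (D i v) x
        - (t * χ R x * v x ^ 2) * D i (Φ i) x - (t * 2 * (χ R x * v x)) * (Φ i x * D i v x)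
        - t * v x ^ 2 * (D i (χ R) x * Φ i x) - 1 / 2 * v x ^ 2 * D i (D i (χ R)) x := by
        intro i; ring
      rw [Finset.sum_congr rfl fun i _ => e i]
      simp only [Finset.sum_add_distrib, Finset.sum_sub_distrib, ← Finset.mul_sum]
      rw [hEq, ← hLΦ]
      ring
    have z : ∫ x, ∑ i, D i (F i) x = 0 := by
      rw [integral_finsetSum _ fun i _ => (int_D (sF i) (cF i) i).1]
      simp [fun i => (int_D (sF i) (cF i) i).2]
    have i0 : Integrable (fun x => ∑ i, D i (F i) x) :=
      integrable_finsetSum _ fun i _ => (int_D (sF i) (cF i) i).1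
    have i1 : Integrable (fun x => χ R x * ∑ i, D i v x * D i v x) :=
      Continuous.integrable_of_hasCompactSupport (hs.mul hN).cont hc.mul_right
    rw [← sub_zero (∫ x, χ R x * ∑ i, D i v x * D i v x), ← z, ← integral_sub i1 i0]
    refine integral_mono (i1.sub i0) (hint.const_mul _) ?_
    intro x
    simp only
    rw [divF]
    have v0 : 0 ≤ v x ^ 2 := sq_nonneg _
    have b1 : -(χ R x * q x) ≤ K := by
      have := bq x
      have h3 : |χ R x * q x| ≤ K := by
        rw [abs_mul, abs_of_nonneg (h0 x)]
        calc χ R x * |q x| ≤ 1 * |q x| := by gcongr; exact h1 x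
          _ ≤ K := by linarith
      linarith [neg_abs_le (χ R x * q x)]
    have hMR : M / R ≤ M := div_le_self hM hR
    have b2 : t * (∑ i, D i (χ R) x * Φ i x) ≤ n * (|t| * M * K) := by
      rw [Finset.mul_sum]
      calc ∑ i, t * (D i (χ R) x * Φ i x) ≤ ∑ i : Fin n, |t| * M * K := by
            refine Finset.sum_le_sum fun i _ => ?_
            refine (le_abs_self _).trans ?_
            rw [abs_mul, abs_mul, mul_assoc]
            gcongr
            · exact (hD1 i x).trans hMR
            · exact bΦ i x
        _ = _ := by simp
    have b3 : ∑ i, D i (D i (χ R)) x ≤ n * M := by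
      calc ∑ i, D i (D i (χ R)) x ≤ ∑ i : Fin n, M :=
            Finset.sum_le_sum fun i _ => (le_abs_self _).trans (hD2 i x)
        _ = _ := by simp
    have nM : 0 ≤ (n : ℝ) * M := by positivity
    nlinarith [mul_le_mul_of_nonneg_right b1 v0, mul_le_mul_of_nonneg_right b2 v0,
      mul_le_mul_of_nonneg_right b3 v0, mul_nonneg nM v0]
  refine (aecover_closedBall (x := (0 : E n)) (l := Filter.atTop) (r := fun m : ℕ => (m : ℝ) + 1)
    (Filter.tendsto_atTop_add_const_right _ _ tendsto_natCast_atTop_atTop)).integrable_of_integral_bounded_of_nonneg_ae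
    (∫ x, ((n : ℝ) * M + n * (|t| * M * K) + K) * v x ^ 2) ?_ ?_ ?_
  · intro m
    exact hN.cont.continuousOn.integrableOn_compact (isCompact_closedBall _ _)
  · exact Filter.Eventually.of_forall fun x => Finset.sum_nonneg fun i _ => mul_self_nonneg _
  · refine Filter.Eventually.of_forall fun m => ?_
    have hR : (1:ℝ) ≤ (m : ℝ) + 1 := by linarith [(Nat.cast_nonneg m : (0:ℝ) ≤ m)]
    refine le_trans ?_ (key _ hR)
    obtain ⟨hs, hc, h0, h1, h2, -, -, -⟩ := hχ _ hR
    have i1 : Integrable (fun x => χ ((m:ℝ)+1) x * ∑ i, D i v x * D i v x) :=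
      Continuous.integrable_of_hasCompactSupport (hs.mul hN).cont hc.mul_right
    calc ∫ x in Metric.closedBall 0 ((m:ℝ)+1), ∑ i, D i v x * D i v x
        = ∫ x in Metric.closedBall 0 ((m:ℝ)+1), χ ((m:ℝ)+1) x * ∑ i, D i v x * D i v x := by
          refine setIntegral_congr_fun Metric.isClosed_closedBall.measurableSet ?_
          intro x hx
          simp only
          rw [h2 x (by simpa using hx), one_mul]
      _ ≤ _ := setIntegral_le_integral i1 (Filter.Eventually.of_forall fun x =>
          mul_nonneg (h0 x) (Finset.sum_nonneg fun i _ => mul_self_nonneg _))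

theorem core {n : ℕ} {v L q c : E n → ℝ} {Φ G : Fin n → E n → ℝ} (hv : Sm v) (hL : Sm L)
    (hq : Sm q) (hΦ : ∀ i, Sm (Φ i)) (hG : ∀ i, Sm (G i)) (t K : ℝ) (ht : 0 ≤ t) (hK : 0 ≤ K)
    (hLΦ : ∀ x, L x = ∑ i, D i (Φ i) x)
    (hEq : ∀ x, ∑ i, D i (D i v) x = 2 * t * ∑ i, Φ i x * D i v x + t * L x * v x + q x * v x)
    (bΦ : ∀ i x, |Φ i x| ≤ K) (bq : ∀ x, |q x| ≤ K) (bL : ∀ x, |L x| ≤ K)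
    (bLi : ∀ i x, |D i L x| ≤ K) (bG : ∀ i x, |G i x| ≤ K)
    (hint : Integrable (fun x => v x ^ 2))
    (hc : Continuous c) (hcpos : ∀ x, 0 < c x)
    (hpos : ∀ x (ξ : Fin n → ℝ) (w : ℝ), c x * w ^ 2 ≤ 2 * ∑ i, ∑ j, ξ i * D i (Φ j) x * ξ j
      - 1 / 2 * w ^ 2 * ∑ i, D i (D i L) x - w ^ 2 * ∑ i, Φ i x * D i q x
      + w ^ 2 * ∑ i, D i (G i) x + 2 * w * ∑ i, G i x * ξ i) :
    ∀ x, v x = 0 := by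
  have hgrad := cacc hv hL hq hΦ t K hK hLΦ hEq bΦ bq hint
  obtain ⟨χ, M, hM, hχ⟩ := cutoffs n
  let F : Fin n → E n → ℝ := fun i x => FF v L q Φ i x + G i x * (v x * v x)
  have sF : ∀ i, Sm (F i) := fun i => (Sm_FF hv hL hq hΦ i).add ((hG i).mul (hv.mul hv))
  have lowF : ∀ x, c x * v x ^ 2 ≤ ∑ i, D i (F i) x := by
    intro x
    have e : ∀ i, D i (F i) x = D i (FF v L q Φ i) x + v x ^ 2 * D i (G i) x
        + 2 * v x * (G i x * D i v x) := by
      intro i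
      simp only [F]
      rw [D_add (Sm_FF hv hL hq hΦ i) ((hG i).mul (hv.mul hv)), D_mul (hG i) (hv.mul hv),
        D_mul hv hv]
      ring
    rw [Finset.sum_congr rfl fun i _ => e i]
    simp only [Finset.sum_add_distrib, ← Finset.mul_sum]
    rw [div_FF hv hL hq hΦ t hLΦ hEq]
    have := hpos x (fun i => D i v x) (v x)
    have h2 := mul_nonneg ht (sq_nonneg (2 * ∑ i, Φ i x * D i v x + L x * v x))
    linarith
  let B : E n → ℝ := fun x => (2 * n * K + 2 * K) * (∑ i, D i v x * D i v x)
    + (3 * K + K * K) * v x ^ 2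
  have hB : Integrable B := (hgrad.const_mul _).add (hint.const_mul _)
  have bF : ∀ i x, |F i x| ≤ B x := by
    intro i x
    set N := ∑ i, D i v x * D i v x with hN
    have hi : ∀ i, D i v x * D i v x ≤ N := fun i =>
      Finset.single_le_sum (f := fun i => D i v x * D i v x) (fun i _ => mul_self_nonneg _)
        (Finset.mem_univ i)
    have hN0 : 0 ≤ N := Finset.sum_nonneg fun i _ => mul_self_nonneg _
    have p1 : ∀ i j, |D i v x * D j v x| ≤ N := by
      intro i j
      rw [abs_le]
      constructor <;> nlinarith [hi i, hi j, sq_nonneg (D i v x + D j v x),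
        sq_nonneg (D i v x - D j v x)]
    have p2 : |D i v x * v x| ≤ N + v x ^ 2 := by
      rw [abs_le]
      constructor <;> nlinarith [hi i, sq_nonneg (D i v x + v x),
        sq_nonneg (D i v x - v x), sq_nonneg (v x)]
    have t1 : |D i v x * ∑ j, Φ j x * D j v x| ≤ n * K * N := by
      rw [Finset.mul_sum]
      refine (Finset.abs_sum_le_sum_abs _ _).trans ?_
      calc ∑ j, |D i v x * (Φ j x * D j v x)| ≤ ∑ j : Fin n, K * N := by
            refine Finset.sum_le_sum fun j _ => ?_
            rw [show D i v x * (Φ j x * D j v x) = Φ j x * (D i v x * D j v x) by ring, abs_mul]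
            exact mul_le_mul (bΦ j x) (p1 i j) (abs_nonneg _) hK
        _ = _ := by simp; ring
    have t2 : |Φ i x * N| ≤ K * N := by
      rw [abs_mul, abs_of_nonneg hN0]; exact mul_le_mul_of_nonneg_right (bΦ i x) hN0
    have t3 : |D i v x * (L x * v x)| ≤ K * (N + v x ^ 2) := by
      rw [show D i v x * (L x * v x) = L x * (D i v x * v x) by ring, abs_mul]
      exact mul_le_mul (bL x) p2 (abs_nonneg _) hK
    have v0 : 0 ≤ v x ^ 2 := sq_nonneg _
    have t4 : |(v x * v x) * D i L x| ≤ K * v x ^ 2 := by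
      rw [show (v x * v x) * D i L x = D i L x * v x ^ 2 by ring, abs_mul, abs_of_nonneg v0]
      exact mul_le_mul_of_nonneg_right (bLi i x) v0
    have t5 : |(q x * Φ i x) * (v x * v x)| ≤ K * K * v x ^ 2 := by
      rw [show (q x * Φ i x) * (v x * v x) = (q x * Φ i x) * v x ^ 2 by ring, abs_mul, abs_mul,
        abs_of_nonneg v0]
      exact mul_le_mul_of_nonneg_right (mul_le_mul (bq x) (bΦ i x) (abs_nonneg _) hK) v0
    have t6 : |G i x * (v x * v x)| ≤ K * v x ^ 2 := by
      rw [show G i x * (v x * v x) = G i x * v x ^ 2 by ring, abs_mul, abs_of_nonneg v0]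
      exact mul_le_mul_of_nonneg_right (bG i x) v0
    simp only [F, FF, B]
    rw [← hN]
    have kv := mul_nonneg hK v0
    rw [abs_le] at *
    constructor <;> linarith [t1.1, t1.2, t2.1, t2.2, t3.1, t3.2, t4.1, t4.2, t5.1, t5.2, t6.1, t6.2]
  have upper : ∀ R, 1 ≤ R → ∫ x, χ R x * (c x * v x ^ 2) ≤ (n * M * ∫ x, B x) / R := by
    intro R hR
    obtain ⟨hs, hcs, h0, h1, -, -, hD1, -⟩ := hχ R hR
    have i1 : Integrable (fun x => χ R x * (c x * v x ^ 2)) :=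
      Continuous.integrable_of_hasCompactSupport
        (hs.cont.mul (hc.mul (hv.cont.pow 2))) hcs.mul_right
    have i2 : Integrable (fun x => χ R x * ∑ i, D i (F i) x) :=
      Continuous.integrable_of_hasCompactSupport
        (hs.mul (Sm.sum fun i => (sF i).D i)).cont hcs.mul_right
    calc ∫ x, χ R x * (c x * v x ^ 2) ≤ ∫ x, χ R x * ∑ i, D i (F i) x :=
          integral_mono i1 i2 fun x => mul_le_mul_of_nonneg_left (lowF x) (h0 x)
      _ = - ∫ x, ∑ i, D i (χ R) x * F i x := int_div sF hs hcs
      _ = ∫ x, - ∑ i, D i (χ R) x * F i x := (integral_neg _).symm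
      _ ≤ ∫ x, (n * (M / R)) * B x := by
          refine integral_mono ?_ (hB.const_mul _) ?_
          · refine Integrable.neg (integrable_finsetSum _ fun i _ => ?_)
            refine Continuous.integrable_of_hasCompactSupport ((hs.D i).mul (sF i)).cont ?_
            exact HasCompactSupport.mul_right (hcs.fderiv_apply (𝕜 := ℝ) _)
          · intro x
            refine (neg_le_abs _).trans ((Finset.abs_sum_le_sum_abs _ _).trans ?_)
            calc ∑ i, |D i (χ R) x * F i x| ≤ ∑ i : Fin n, (M / R) * B x := by
                  refine Finset.sum_le_sum fun i _ => ?_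
                  rw [abs_mul]
                  exact mul_le_mul (hD1 i x) (bF i x) (abs_nonneg _) (by positivity)
              _ = _ := by simp; ring
      _ = _ := by rw [integral_const_mul]; ring
  -- conclusion
  intro x
  by_contra hx
  set R0 := max 1 ‖x‖ with hR0
  have hR01 : 1 ≤ R0 := le_max_left _ _
  obtain ⟨hs, hcs, h0, h1, h2, h3, -, -⟩ := hχ R0 hR01
  have pos : 0 < ∫ y, χ R0 y * (c y * v y ^ 2) := by
    refine Continuous.integral_pos_of_hasCompactSupport_nonneg_nonzero (x := x)
      (hs.cont.mul (hc.mul (hv.cont.pow 2))) hcs.mul_right ?_ ?_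
    · intro y
      exact mul_nonneg (h0 y) (mul_nonneg (hcpos y).le (sq_nonneg _))
    · rw [h2 x (le_max_right _ _), one_mul]
      exact mul_ne_zero (hcpos x).ne' (pow_ne_zero 2 hx)
  have le : ∀ R, 2 * R0 ≤ R → ∫ y, χ R0 y * (c y * v y ^ 2) ≤ (n * M * ∫ x, B x) / R := by
    intro R hR
    have hR1 : 1 ≤ R := by linarith
    refine le_trans ?_ (upper R hR1)
    obtain ⟨hs', hcs', h0', h1', h2', h3', -, -⟩ := hχ R hR1
    refine integral_mono (Continuous.integrable_of_hasCompactSupport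
        (hs.cont.mul (hc.mul (hv.cont.pow 2))) hcs.mul_right)
        (Continuous.integrable_of_hasCompactSupport
        (hs'.cont.mul (hc.mul (hv.cont.pow 2))) hcs'.mul_right) ?_
    intro y
    refine mul_le_mul_of_nonneg_right ?_ (mul_nonneg (hcpos y).le (sq_nonneg _))
    by_cases hy : ‖y‖ ≤ 2 * R0
    · rw [h2' y (hy.trans hR)]; exact h1 y
    · rw [h3 y (not_le.1 hy).le]; exact h0' y
  have lim : Filter.Tendsto (fun R : ℝ => (n * M * ∫ x, B x) / R) Filter.atTop (nhds 0) :=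
    tendsto_const_nhds.div_atTop Filter.tendsto_id
  have := ge_of_tendsto lim ((Filter.eventually_ge_atTop (2 * R0)).mono le)
  linarith

noncomputable def rp {n : ℕ} (p : ℝ) : E n → ℝ := fun x => (1 + ‖x‖ ^ 2) ^ p

theorem rho_pos {n : ℕ} (x : E n) : 0 < 1 + ‖x‖ ^ 2 := by positivity

theorem rp_pos {n : ℕ} (p : ℝ) (x : E n) : 0 < rp p x := Real.rpow_pos_of_pos (rho_pos x) p

theorem rp_mono {n : ℕ} {p q : ℝ} (h : p ≤ q) (x : E n) : rp p x ≤ rp q x :=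
  Real.rpow_le_rpow_of_exponent_le (by nlinarith [sq_nonneg ‖x‖]) h

theorem rp_zero {n : ℕ} (x : E n) : rp 0 x = 1 := Real.rpow_zero _

theorem rp_le_one {n : ℕ} {p : ℝ} (h : p ≤ 0) (x : E n) : rp p x ≤ 1 := by
  rw [← rp_zero x]; exact rp_mono h x

theorem rp_mul {n : ℕ} (p q : ℝ) (x : E n) : rp p x * rp q x = rp (p + q) x :=
  (Real.rpow_add (rho_pos x) p q).symm

theorem rp_one {n : ℕ} (x : E n) : rp 1 x = 1 + ‖x‖ ^ 2 := Real.rpow_one _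

theorem nsq {n : ℕ} (x : E n) : ‖x‖ ^ 2 = ∑ i, x i * x i := by
  rw [EuclideanSpace.norm_sq_eq]
  refine Finset.sum_congr rfl fun i _ => ?_
  rw [Real.norm_eq_abs, sq_abs, sq]

theorem Sm_rp {n : ℕ} (p : ℝ) : Sm (rp p : E n → ℝ) := by
  refine ContDiff.rpow_const_of_ne ?_ fun x => (rho_pos x).ne'
  exact contDiff_const.add (contDiff_norm_sq ℝ)

theorem D_rp {n : ℕ} (p : ℝ) (i : Fin n) (x : E n) :
    D i (rp p) x = 2 * p * (x i * rp (p - 1) x) := by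
  have h1 : HasFDerivAt (fun x : E n => 1 + ‖x‖ ^ 2) (2 • (innerSL ℝ x)) x :=
    (hasStrictFDerivAt_norm_sq x).hasFDerivAt.const_add 1
  have h2 := (h1.rpow_const (p := p) (Or.inl (rho_pos x).ne')).fderiv
  have h3 : fderiv ℝ (rp p) x = _ := h2
  simp only [D]
  rw [h3]
  simp [rp, EuclideanSpace.inner_single_right]
  ring

theorem coord_sq_le {n : ℕ} (i : Fin n) (x : E n) : x i * x i ≤ ‖x‖ ^ 2 := by
  rw [nsq]
  exact Finset.single_le_sum (f := fun i => x i * x i) (fun i _ => mul_self_nonneg _)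
    (Finset.mem_univ i)

theorem coord_rp {n : ℕ} (i : Fin n) (x : E n) : |x i| * rp (-1/2) x ≤ 1 := by
  have h : (|x i| * rp (-1/2) x) ^ 2 ≤ 1 := by
    rw [mul_pow, sq_abs, sq (rp _ x), rp_mul]
    have h1 : rp 1 x * rp (-1/2 + -1/2) x = 1 := by
      rw [rp_mul, ← rp_zero x]; norm_num
    have h2 := coord_sq_le i x
    rw [rp_one] at h1
    nlinarith [rp_pos (-1/2 + -1/2) x]
  have := rp_pos (-1/2) x
  exact (sq_le_one_iff₀ (by positivity)).1 h

theorem lap_rp {n : ℕ} (p : ℝ) (x : E n) :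
    |∑ i, D i (D i (rp p)) x| ≤ 2 * |p| * (n + 2 * |p - 1|) * rp (p - 1) x := by
  have e : ∀ i : Fin n, D i (D i (rp p)) x =
      2 * p * (rp (p - 1) x + 2 * (p - 1) * rp (p - 1 - 1) x * (x i * x i)) := by
    intro i
    have e1 : D i (rp p : E n → ℝ) = fun x => 2 * p * (x i * rp (p - 1) x) :=
      funext fun x => D_rp p i x
    rw [e1, D_cmul ((Sm.coord i).mul (Sm_rp _)), D_mul (Sm.coord i) (Sm_rp _), D_coord, D_rp]
    simp; left; ring
  rw [Finset.sum_congr rfl fun i _ => e i, ← Finset.mul_sum, Finset.sum_add_distrib,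
    ← Finset.mul_sum, ← nsq, abs_mul, abs_mul, mul_assoc _ _ (rp (p-1) x), abs_two]
  refine mul_le_mul_of_nonneg_left ?_ (by positivity)
  refine (abs_add_le _ _).trans ?_
  have h0 := rp_pos (p - 1) x
  have h1 : rp 1 x * rp (p - 1 - 1) x = rp (p - 1) x := by rw [rp_mul]; congr 1; ring
  rw [rp_one] at h1
  have h2 := rp_pos (p - 1 - 1) x
  have h3 : rp (p - 1 - 1) x * ‖x‖ ^ 2 ≤ rp (p - 1) x := by nlinarith
  have a1 : |∑ _i : Fin n, rp (p - 1) x| = n * rp (p - 1) x := by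
    simp [abs_of_pos h0]
  rw [a1, mul_assoc, abs_mul, abs_mul, abs_two,
    abs_of_nonneg (by positivity : 0 ≤ rp (p - 1 - 1) x * ‖x‖ ^ 2), add_mul]
  gcongr

theorem lin_bounds {n : ℕ} (m : ℕ) (c p : Fin m → ℝ) (hp : ∀ k, p k ≤ -1/2) :
    ∃ C : ℝ, 0 ≤ C ∧ ∀ x : E n, |∑ k, c k * rp (p k) x| ≤ C ∧
      (∀ i, |D i (fun x => ∑ k, c k * rp (p k) x) x| ≤ C) ∧
      |∑ i, D i (D i (fun x => ∑ k, c k * rp (p k) x)) x| ≤ C * rp (-3/2) x := by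
  have hS : ∀ k, Sm (fun x : E n => c k * rp (p k) x) := fun k => (Sm.const _).mul (Sm_rp _)
  have hD : ∀ i, D i (fun x : E n => ∑ k, c k * rp (p k) x)
      = fun x => ∑ k, c k * D i (rp (p k)) x := by
    intro i; funext x
    rw [D_sum hS]
    exact Finset.sum_congr rfl fun k _ => D_cmul (Sm_rp _) _ _ _
  have hDD : ∀ i x, D i (D i (fun x : E n => ∑ k, c k * rp (p k) x)) x
      = ∑ k, c k * D i (D i (rp (p k))) x := by
    intro i x
    rw [hD, D_sum fun k => (Sm.const _).mul ((Sm_rp _).D i)]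
    exact Finset.sum_congr rfl fun k _ => D_cmul ((Sm_rp _).D i) _ _ _
  have p1 : 0 ≤ ∑ k, |c k| := by positivity
  have p2 : 0 ≤ ∑ k, |c k| * (2 * |p k|) := by positivity
  have p3 : 0 ≤ ∑ k, |c k| * (2 * |p k| * (n + 2 * |p k - 1|)) := by positivity
  refine ⟨∑ k, |c k| + ∑ k, |c k| * (2 * |p k|) + ∑ k, |c k| * (2 * |p k| * (n + 2 * |p k - 1|)),
    by positivity, fun x => ⟨?_, fun i => ?_, ?_⟩⟩
  · have : |∑ k, c k * rp (p k) x| ≤ ∑ k, |c k| := by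
      refine (Finset.abs_sum_le_sum_abs _ _).trans (Finset.sum_le_sum fun k _ => ?_)
      rw [abs_mul, abs_of_pos (rp_pos _ x)]
      exact mul_le_of_le_one_right (abs_nonneg _) (rp_le_one (by linarith [hp k]) x)
    linarith
  · have : |D i (fun x => ∑ k, c k * rp (p k) x) x| ≤ ∑ k, |c k| * (2 * |p k|) := by
      rw [hD]
      refine (Finset.abs_sum_le_sum_abs _ _).trans (Finset.sum_le_sum fun k _ => ?_)
      rw [D_rp, abs_mul, abs_mul, abs_mul, abs_mul, abs_two, abs_of_pos (rp_pos _ x)]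
      refine mul_le_mul_of_nonneg_left ?_ (abs_nonneg _)
      refine mul_le_of_le_one_right (by positivity) ?_
      refine le_trans ?_ (coord_rp i x)
      exact mul_le_mul_of_nonneg_left (rp_mono (by linarith [hp k]) x) (abs_nonneg _)
    linarith
  · have : |∑ i, D i (D i (fun x => ∑ k, c k * rp (p k) x)) x|
        ≤ (∑ k, |c k| * (2 * |p k| * (n + 2 * |p k - 1|))) * rp (-3/2) x := by
      rw [Finset.sum_congr rfl fun i _ => hDD i x, Finset.sum_comm, Finset.sum_mul]
      refine (Finset.abs_sum_le_sum_abs _ _).trans (Finset.sum_le_sum fun k _ => ?_)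
      rw [← Finset.mul_sum, abs_mul, mul_assoc]
      refine mul_le_mul_of_nonneg_left ?_ (abs_nonneg _)
      refine (lap_rp (p k) x).trans ?_
      exact mul_le_mul_of_nonneg_left (rp_mono (by linarith [hp k]) x) (by positivity)
    have h0 := rp_pos (-3/2) x
    nlinarith [mul_nonneg p1 h0.le, mul_nonneg p2 h0.le]

/-- radial coefficient -/
noncomputable def aa {n : ℕ} (e : ℝ) : E n → ℝ := fun x => rp (-1/2) x - 1/2 * rp (-(1+e)/2) x
noncomputable def hh {n : ℕ} (e : ℝ) : E n → ℝ :=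
  fun x => 1/2 * (1+e) * rp (-(3+e)/2) x - rp (-3/2) x
noncomputable def phi {n : ℕ} (e : ℝ) : E n → ℝ :=
  fun x => rp (1/2) x - (1/(2*(1-e))) * rp ((1-e)/2) x
noncomputable def Ph {n : ℕ} (e : ℝ) (i : Fin n) : E n → ℝ := fun x => x i * aa e x
noncomputable def LL {n : ℕ} (e : ℝ) : E n → ℝ :=
  fun x => ∑ k, ![(n:ℝ) - 1, 1/2 * (1+e) - n/2, 1, -(1/2 * (1+e))] k *
    rp (![-1/2, -(1+e)/2, -3/2, -(3+e)/2] k) x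

theorem Sm_aa {n : ℕ} (e : ℝ) : Sm (aa e : E n → ℝ) := (Sm_rp _).sub ((Sm.const _).mul (Sm_rp _))
theorem Sm_phi {n : ℕ} (e : ℝ) : Sm (phi e : E n → ℝ) := (Sm_rp _).sub ((Sm.const _).mul (Sm_rp _))
theorem Sm_Ph {n : ℕ} (e : ℝ) (i : Fin n) : Sm (Ph e i) := (Sm.coord i).mul (Sm_aa e)
theorem Sm_LL {n : ℕ} (e : ℝ) : Sm (LL e : E n → ℝ) :=
  Sm.sum fun _ => (Sm.const _).mul (Sm_rp _)

theorem D_phi {n : ℕ} (e : ℝ) (he : e ≤ 1/2) (i : Fin n) (x : E n) :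
    D i (phi e) x = Ph e i x := by
  unfold phi Ph aa
  rw [D_sub (Sm_rp _) ((Sm.const _).mul (Sm_rp _)), D_cmul (Sm_rp _), D_rp, D_rp]
  have h1 : (1/2 - 1 : ℝ) = -1/2 := by norm_num
  have h2 : ((1-e)/2 - 1 : ℝ) = -(1+e)/2 := by ring
  have h3 : 1 - e ≠ 0 := by linarith
  rw [h1, h2]
  field_simp

theorem D_aa {n : ℕ} (e : ℝ) (i : Fin n) (x : E n) : D i (aa e) x = x i * hh e x := by
  unfold aa hh
  rw [D_sub (Sm_rp _) ((Sm.const _).mul (Sm_rp _)), D_cmul (Sm_rp _), D_rp, D_rp]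
  have h1 : (-1/2 - 1 : ℝ) = -3/2 := by norm_num
  have h2 : (-(1+e)/2 - 1 : ℝ) = -(3+e)/2 := by ring
  rw [h1, h2]
  ring

theorem D_Ph {n : ℕ} (e : ℝ) (i j : Fin n) (x : E n) :
    D i (Ph e j) x = (if i = j then 1 else 0) * aa e x + x i * x j * hh e x := by
  unfold Ph
  rw [D_mul (Sm.coord j) (Sm_aa e), D_coord, D_aa]
  ring

theorem LL_eq {n : ℕ} (e : ℝ) (x : E n) : LL e x = ∑ i, D i (Ph e i) x := by
  simp only [D_Ph, if_true, Finset.sum_add_distrib, ← Finset.sum_mul, ← nsq]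
  unfold LL aa hh
  have h1 : rp 1 x * rp (-3/2) x = rp (-1/2) x := by rw [rp_mul]; congr 1; norm_num
  have h2 : rp 1 x * rp (-(3+e)/2) x = rp (-(1+e)/2) x := by rw [rp_mul]; congr 1; ring
  rw [rp_one] at h1 h2
  simp [Fin.sum_univ_four]
  simp at h1 h2
  linear_combination (-1 : ℝ) * (-h1 + 1/2*(1+e)*h2)

theorem radial_facts {n : ℕ} (e : ℝ) (he0 : 0 < e) (he : e ≤ 1/2) (x : E n) :
    hh e x ≤ 0 ∧ 1/2 * rp (-1/2) x ≤ aa e x ∧ aa e x ≤ rp (-1/2) x ∧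
    e/2 * rp (-(1+e)/2) x ≤ aa e x + hh e x * ‖x‖^2 := by
  have u0 := rp_pos (-1/2) x
  have P0 := rp_pos (-(1+e)/2) x
  have PU : rp (-(1+e)/2) x ≤ rp (-1/2) x := rp_mono (by linarith) x
  have w1 : rp (-(3+e)/2) x ≤ rp (-3/2) x := rp_mono (by linarith) x
  have w0 := rp_pos (-(3+e)/2) x
  have h1 : rp 1 x * rp (-3/2) x = rp (-1/2) x := by rw [rp_mul]; congr 1; norm_num
  have h2 : rp 1 x * rp (-(3+e)/2) x = rp (-(1+e)/2) x := by rw [rp_mul]; congr 1; ring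
  rw [rp_one] at h1 h2
  unfold hh aa
  refine ⟨by nlinarith, by linarith, by linarith, ?_⟩
  have : rp (-1/2) x - 1/2 * rp (-(1+e)/2) x +
      (1/2 * (1+e) * rp (-(3+e)/2) x - rp (-3/2) x) * ‖x‖^2 =
      e/2 * rp (-(1+e)/2) x + (rp (-3/2) x - 1/2*(1+e)* rp (-(3+e)/2) x) := by
    linear_combination (-h1 + 1/2*(1+e)*h2)
  rw [this]
  nlinarith

theorem Ph_le {n : ℕ} (e : ℝ) (he0 : 0 < e) (he : e ≤ 1/2) (i : Fin n) (x : E n) :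
    |Ph e i x| ≤ 1 := by
  obtain ⟨-, h1, h2, -⟩ := radial_facts e he0 he x
  have u0 := rp_pos (-1/2) x
  unfold Ph
  rw [abs_mul, abs_of_nonneg (by linarith : 0 ≤ aa e x)]
  exact (mul_le_mul_of_nonneg_left h2 (abs_nonneg _)).trans (coord_rp i x)

theorem hess_eq {n : ℕ} (e : ℝ) (x : E n) (ξ : Fin n → ℝ) :
    ∑ i, ∑ j, ξ i * D i (Ph e j) x * ξ j
      = aa e x * ∑ i, ξ i * ξ i + hh e x * (∑ i, x i * ξ i) ^ 2 := by
  have e1 : ∀ i, ∑ j, ξ i * D i (Ph e j) x * ξ j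
      = aa e x * (ξ i * ξ i) + (hh e x * ∑ j, x j * ξ j) * (x i * ξ i) := by
    intro i
    have : ∀ j, ξ i * D i (Ph e j) x * ξ j = (if i = j then aa e x * (ξ i * ξ j) else 0)
        + (hh e x * (x i * ξ i)) * (x j * ξ j) := by
      intro j
      rw [D_Ph]
      split_ifs <;> ring
    rw [Finset.sum_congr rfl fun j _ => this j, Finset.sum_add_distrib, ← Finset.mul_sum]
    simp
    ring
  rw [Finset.sum_congr rfl fun i _ => e1 i, Finset.sum_add_distrib, ← Finset.mul_sum,
    ← Finset.mul_sum]
  ring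

theorem hess_ge {n : ℕ} (e : ℝ) (he0 : 0 < e) (he : e ≤ 1/2) (x : E n) (ξ : Fin n → ℝ) :
    e/2 * rp (-(1+e)/2) x * ∑ i, ξ i * ξ i ≤ ∑ i, ∑ j, ξ i * D i (Ph e j) x * ξ j := by
  obtain ⟨h1, h2, h3, h4⟩ := radial_facts e he0 he x
  rw [hess_eq]
  have cs : (∑ i, x i * ξ i) ^ 2 ≤ ‖x‖^2 * ∑ i, ξ i * ξ i := by
    have := Finset.sum_mul_sq_le_sq_mul_sq Finset.univ (fun i => x i) ξ
    rw [nsq]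
    simpa [sq] using this
  have hN : 0 ≤ ∑ i, ξ i * ξ i := Finset.sum_nonneg fun i _ => mul_self_nonneg _
  nlinarith [mul_le_mul_of_nonpos_left cs h1, mul_le_mul_of_nonneg_right h4 hN]

noncomputable def GG {n : ℕ} (e t : ℝ) (i : Fin n) : E n → ℝ :=
  fun x => t * (e/4) * (x i * rp (-1-e/2) x)

theorem Sm_GG {n : ℕ} (e t : ℝ) (i : Fin n) : Sm (GG e t i) :=
  (Sm.const _).mul ((Sm.coord i).mul (Sm_rp _))

theorem div_GG {n : ℕ} (e t : ℝ) (x : E n) : ∑ i, D i (GG e t i) x =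
    t * (e/4) * (n * rp (-1-e/2) x - (2+e) * ‖x‖^2 * rp (-2-e/2) x) := by
  have : ∀ i, D i (GG e t i) x = t * (e/4) * (rp (-1-e/2) x
      - (2+e) * rp (-2-e/2) x * (x i * x i)) := by
    intro i
    unfold GG
    rw [D_cmul ((Sm.coord i).mul (Sm_rp _)), D_mul (Sm.coord i) (Sm_rp _), D_coord, D_rp,
      show (-1-e/2-1 : ℝ) = -2-e/2 by ring]
    simp only [if_true]
    ring
  rw [Finset.sum_congr rfl fun i _ => this i, ← Finset.mul_sum, Finset.sum_sub_distrib,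
    ← Finset.mul_sum, ← nsq]
  simp
  left; ring

theorem final_ineq (e t C s u P n A B : ℝ) (he0 : 0 < e) (he : e ≤ 1/2)
    (hs : 0 ≤ s) (hu : 0 < u) (huu : (1 + s) * (u * u) = 1) (hP : 0 < P) (hn : 1 ≤ n)
    (ht12 : 12 ≤ t) (ht : 16 * (2 * C + 1) ≤ e * t) (hA : |A| ≤ C * P) (hB : |B| ≤ C * P) :
    P ≤ t ^ 2 * (e/8) * P * (u*u) * s + t * (e/4) * (n * (u * P) - (2+e) * s * (u * (u * u) * P))
      - 1/2 * A - B := by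
  have hA' := (abs_le.1 hA).2
  have hB' := (abs_le.1 hB).2
  have hC : 0 ≤ C := by
    have := (abs_nonneg A).trans hA
    exact nonneg_of_mul_nonneg_left this hP
  set T := s * (u*u) with hT
  have hT0 : 0 ≤ T := by positivity
  have hU : u * u = 1 - T := by rw [hT]; linarith
  have hu1 : u ≤ 1 := by nlinarith [mul_self_nonneg u]
  have hu2 : u * u ≤ u := by nlinarith
  have hnu : u * u ≤ n * u := by nlinarith
  have h3 : (2+e) * T * u ≤ 3 * T := by
    have : (2+e) * u ≤ 3 := by nlinarith
    nlinarith
  -- scalar inequality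
  have ht0 : 0 < t := by linarith
  have k1 : t * e * (12 * T) ≤ t * e * (t * T) := by
    refine mul_le_mul_of_nonneg_left ?_ (by positivity)
    exact mul_le_mul_of_nonneg_right ht12 hT0
  have key : 1 + 2 * C ≤ t ^ 2 * (e/8) * T + t * (e/4) * (n * u - (2+e) * T * u) := by
    have a1 : t * (e/4) * (1 - T - 3 * T) ≤ t * (e/4) * (n * u - (2+e) * T * u) := by
      refine mul_le_mul_of_nonneg_left ?_ (by positivity)
      linarith
    have a2 : 0 ≤ e * t * T := by positivity
    have a3 : 0 ≤ e * t * (t * T) := by positivity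
    nlinarith
  have k2 := mul_le_mul_of_nonneg_right key hP.le
  have e1 : (t ^ 2 * (e/8) * T + t * (e/4) * (n * u - (2+e) * T * u)) * P =
    t ^ 2 * (e/8) * P * (u*u) * s + t * (e/4) * (n * (u * P) - (2+e) * s * (u * (u * u) * P)) := by
    rw [hT]; ring
  rw [e1] at k2
  nlinarith

theorem main_real {n : ℕ} (hn : 1 ≤ n) (e : ℝ) (he0 : 0 < e) (he : e ≤ 1/2) {W u : E n → ℝ}
    (hW : Sm W) (hu : Sm u) (K0 K1 : ℝ) (bW : ∀ x, |W x| ≤ K0)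
    (bW1 : ∀ i x, |D i W x| ≤ K1 * rp (-(1+e)/2) x)
    (hEq : ∀ x, ∑ i, D i (D i u) x = W x * u x)
    (hdec : ∀ α : ℝ, Integrable (fun x => Real.exp (2*α*‖x‖) * u x ^ 2)) : ∀ x, u x = 0 := by
  obtain ⟨CL, hCL0, hCL⟩ := lin_bounds (n := n) 4 ![(n:ℝ) - 1, 1/2 * (1+e) - n/2, 1, -(1/2 * (1+e))]
    ![-1/2, -(1+e)/2, -3/2, -(3+e)/2] (by
      intro k; fin_cases k <;> simp <;> linarith)
  have hK0 : 0 ≤ K0 := (abs_nonneg _).trans (bW 0)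
  set C := CL + n * |K1| with hC
  have hC0 : 0 ≤ C := by positivity
  set t := 12 + 16 * (2 * C + 1) / e with ht
  have ht12 : 12 ≤ t := by
    have : 0 ≤ 16 * (2 * C + 1) / e := by positivity
    linarith
  have hte : 16 * (2 * C + 1) ≤ e * t := by
    have h1 : e * (16 * (2 * C + 1) / e) = 16 * (2 * C + 1) := by field_simp
    have h2 : e * t = 12 * e + e * (16 * (2 * C + 1) / e) := by rw [ht]; ring
    rw [h2, h1]; linarith
  have ht0 : 0 ≤ t := by linarith
  let q : E n → ℝ := fun x => W x - t^2 * ∑ i, Ph e i x * Ph e i x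
  have hq : Sm q := hW.sub ((Sm.const _).mul (Sm.sum fun i => (Sm_Ph e i).mul (Sm_Ph e i)))
  let w : E n → ℝ := fun x => Real.exp (t * phi e x)
  have hw : Sm w := ((Sm.const t).mul (Sm_phi e)).exp
  have Dw : ∀ i, D i w = fun x => w x * (t * Ph e i x) := by
    intro i; funext x
    simp only [w]
    rw [D_exp ((Sm.const t).mul (Sm_phi e)), D_cmul (Sm_phi e), D_phi e he]
  let v : E n → ℝ := fun x => w x * u x
  have hv : Sm v := hw.mul hu
  have sΦ := fun i : Fin n => Sm_Ph e i
  have Dv : ∀ i, D i v = fun x => w x * (t * Ph e i x) * u x + w x * D i u x := by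
    intro i; funext x
    simp only [v]
    rw [D_mul hw hu, Dw]
  have DDv : ∀ i x, D i (D i v) x = w x * D i (D i u) x + 2 * t * (Ph e i x * D i v x)
      + t * v x * D i (Ph e i) x - t^2 * v x * (Ph e i x * Ph e i x) := by
    intro i x
    have hs : Sm (fun x => w x * (t * Ph e i x)) := hw.mul ((Sm.const t).mul (sΦ i))
    rw [Dv, D_add (hs.mul hu) (hw.mul (hu.D i)), D_mul hs hu, D_mul hw (hu.D i),
      D_mul hw ((Sm.const t).mul (sΦ i)), D_cmul (sΦ i), Dw]
    simp only [v]
    ring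
  have hEqv : ∀ x, ∑ i, D i (D i v) x
      = 2 * t * ∑ i, Ph e i x * D i v x + t * LL e x * v x + q x * v x := by
    intro x
    rw [Finset.sum_congr rfl fun i _ => DDv i x]
    simp only [Finset.sum_add_distrib, Finset.sum_sub_distrib, ← Finset.mul_sum]
    rw [hEq, ← LL_eq]
    simp only [q, v]
    ring
  have hint : Integrable (fun x => v x ^ 2) := by
    refine ((hdec t).const_mul (Real.exp (2 * t))).mono' (hv.cont.pow 2).aestronglyMeasurable ?_
    refine Filter.Eventually.of_forall fun x => ?_
    have hphi : phi e x ≤ 1 + ‖x‖ := by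
      have h1 : rp (1/2) x ≤ 1 + ‖x‖ := by
        unfold rp
        rw [← Real.sqrt_eq_rpow]
        refine Real.sqrt_le_iff.2 ⟨by positivity, ?_⟩
        nlinarith [norm_nonneg x]
      have h2 : 0 ≤ (1/(2*(1-e))) * rp ((1-e)/2) x := by
        have := rp_pos ((1-e)/2) x
        have : 0 < 1 - e := by linarith
        positivity
      unfold phi
      linarith
    rw [Real.norm_of_nonneg (sq_nonneg _)]
    simp only [v, w]
    rw [mul_pow, ← mul_assoc]
    refine mul_le_mul_of_nonneg_right ?_ (sq_nonneg _)
    rw [← Real.exp_add, ← Real.exp_nat_mul]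
    refine Real.exp_le_exp.2 ?_
    push_cast
    nlinarith [mul_le_mul_of_nonneg_left hphi ht0]
  have bS : ∀ x : E n, 0 ≤ ∑ i, Ph e i x * Ph e i x ∧ ∑ i, Ph e i x * Ph e i x ≤ n := by
    intro x
    refine ⟨Finset.sum_nonneg fun i _ => mul_self_nonneg _, ?_⟩
    calc ∑ i, Ph e i x * Ph e i x ≤ ∑ _i : Fin n, (1:ℝ) := by
          refine Finset.sum_le_sum fun i _ => ?_
          rw [← abs_mul_abs_self]
          have := Ph_le e he0 he i x
          nlinarith [abs_nonneg (Ph e i x)]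
      _ = n := by simp
  have key := core (c := rp (-(1+e)/2)) (G := GG e t) (Φ := Ph e) (L := LL e) (q := q) (v := v)
    hv (Sm_LL e) hq sΦ (Sm_GG e t) t (1 + CL + K0 + t^2 * n + t) ht0 (by positivity) (LL_eq e) hEqv
    ?_ ?_ ?_ ?_ ?_ hint (Sm_rp _).cont (rp_pos _) ?_
  · intro x
    have := key x
    simp only [v, w] at this
    exact (mul_eq_zero.1 this).resolve_left (Real.exp_pos _).ne'
  · intro i x
    have := Ph_le e he0 he i x
    have : 0 ≤ t^2 * (n:ℝ) := by positivity
    linarith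
  · intro x
    simp only [q]
    have h1 := abs_le.1 (bW x)
    obtain ⟨h2, h3⟩ := bS x
    have h4 := mul_le_mul_of_nonneg_left h3 (sq_nonneg t)
    have h5 := mul_nonneg (sq_nonneg t) h2
    rw [abs_le]
    constructor <;> linarith
  · intro x
    have : |LL e x| ≤ CL := (hCL x).1
    have : 0 ≤ t^2 * (n:ℝ) := by positivity
    linarith
  · intro i x
    have : |D i (LL e) x| ≤ CL := (hCL x).2.1 i
    have : 0 ≤ t^2 * (n:ℝ) := by positivity
    linarith
  · intro i x
    have h1 : |GG e t i x| ≤ t := by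
      unfold GG
      rw [abs_mul, abs_of_nonneg (by positivity : 0 ≤ t * (e/4)), abs_mul,
        abs_of_pos (rp_pos _ x)]
      have h2 : |x i| * rp (-1-e/2) x ≤ 1 :=
        (mul_le_mul_of_nonneg_left (rp_mono (by linarith) x) (abs_nonneg _)).trans (coord_rp i x)
      have h3 : 0 ≤ |x i| * rp (-1-e/2) x := mul_nonneg (abs_nonneg _) (rp_pos _ x).le
      have h4 : t * (e/4) ≤ t := by nlinarith
      nlinarith
    have : 0 ≤ t^2 * (n:ℝ) := by positivity
    linarith
  · intro x ξ y
    set P := rp (-(1+e)/2) x with hP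
    set U := rp (-1/2) x with hU
    have P0 : 0 < P := rp_pos _ x
    have U0 : 0 < U := rp_pos _ x
    have hUU : (1 + ‖x‖^2) * (U * U) = 1 := by
      rw [← rp_one, hU, rp_mul, rp_mul, ← rp_zero x]; norm_num
    have hA : |∑ i, D i (D i (LL e)) x| ≤ C * P := by
      have h1 : |∑ i, D i (D i (LL e)) x| ≤ CL * rp (-3/2) x := (hCL x).2.2
      have h2 : rp (-3/2) x ≤ P := rp_mono (by linarith) x
      have h3 : 0 ≤ n * |K1| * P := by positivity
      have h4 := mul_le_mul_of_nonneg_left h2 hCL0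
      rw [hC, add_mul]
      linarith
    have hB : |∑ i, Ph e i x * D i W x| ≤ C * P := by
      have h1 : |∑ i, Ph e i x * D i W x| ≤ n * |K1| * P := by
        refine (Finset.abs_sum_le_sum_abs _ _).trans ?_
        calc ∑ i, |Ph e i x * D i W x| ≤ ∑ _i : Fin n, 1 * (|K1| * P) := by
              refine Finset.sum_le_sum fun i _ => ?_
              rw [abs_mul]
              refine mul_le_mul (Ph_le e he0 he i x) ?_ (abs_nonneg _) zero_le_one
              exact (bW1 i x).trans (mul_le_mul_of_nonneg_right (le_abs_self _) P0.le)
          _ = _ := by simp; ring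
      have h2 : 0 ≤ CL * P := by positivity
      rw [hC, add_mul]
      linarith
    have fin := final_ineq e t C (‖x‖^2) U P n (∑ i, D i (D i (LL e)) x)
      (∑ i, Ph e i x * D i W x) he0 he (sq_nonneg _) U0 hUU P0 (by exact_mod_cast hn) ht12 hte hA hB
    -- gradient of q
    have hDq : ∑ i, Ph e i x * D i q x = ∑ i, Ph e i x * D i W x
        - 2 * t^2 * ∑ i, ∑ j, Ph e i x * D i (Ph e j) x * Ph e j x := by
      have : ∀ i, Ph e i x * D i q x = Ph e i x * D i W x
          - 2 * t^2 * ∑ j, Ph e i x * D i (Ph e j) x * Ph e j x := by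
        intro i
        simp only [q]
        rw [D_sub hW ((Sm.const _).mul (Sm.sum fun i => (sΦ i).mul (sΦ i))),
          D_cmul (Sm.sum fun i => (sΦ i).mul (sΦ i)), D_sum (fun i => (sΦ i).mul (sΦ i))]
        simp only [D_mul (sΦ _) (sΦ _), Finset.mul_sum, mul_sub]
        congr 1
        refine Finset.sum_congr rfl fun j _ => ?_
        ring
      rw [Finset.sum_congr rfl fun i _ => this i, Finset.sum_sub_distrib, ← Finset.mul_sum]
    have hH1 := hess_ge e he0 he x ξ
    have hH2 := hess_ge e he0 he x (fun i => Ph e i x)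
    have hS : ∑ i, Ph e i x * Ph e i x = aa e x ^ 2 * ‖x‖^2 := by
      rw [nsq, Finset.mul_sum]
      refine Finset.sum_congr rfl fun i _ => ?_
      unfold Ph; ring
    obtain ⟨-, ha, -, -⟩ := radial_facts e he0 he x
    have hS2 : 1/4 * (U * U) * ‖x‖^2 ≤ ∑ i, Ph e i x * Ph e i x := by
      rw [hS]
      refine mul_le_mul_of_nonneg_right ?_ (sq_nonneg _)
      rw [← hU] at ha
      nlinarith
    have r1 : rp (-1-e/2) x = U * P := by
      rw [hU, hP, rp_mul]; congr 1; ring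
    have r2 : rp (-2-e/2) x = U * (U * U) * P := by
      rw [hU, hP, rp_mul, rp_mul, rp_mul]; congr 1; ring
    have hGx : ∑ i, GG e t i x * ξ i = t * (e/4) * (U * P) * ∑ i, x i * ξ i := by
      rw [Finset.mul_sum]
      refine Finset.sum_congr rfl fun i _ => ?_
      unfold GG; rw [r1]; ring
    have sq : 0 ≤ ∑ i, ξ i * ξ i + (t * y * U / 2)^2 * ‖x‖^2
        + 2 * (t * y * U / 2) * ∑ i, x i * ξ i := by
      have : ∑ i, ξ i * ξ i + (t * y * U / 2)^2 * ‖x‖^2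
        + 2 * (t * y * U / 2) * ∑ i, x i * ξ i = ∑ i, (ξ i + (t * y * U / 2) * x i)^2 := by
        rw [nsq, Finset.mul_sum, Finset.mul_sum, ← Finset.sum_add_distrib, ← Finset.sum_add_distrib]
        refine Finset.sum_congr rfl fun i _ => ?_
        ring
      rw [this]
      exact Finset.sum_nonneg fun i _ => sq_nonneg _
    rw [hDq, div_GG, hGx, r1, r2]
    set N := ∑ i, ξ i * ξ i with hN
    have N0 : 0 ≤ N := Finset.sum_nonneg fun i _ => mul_self_nonneg _
    set X := ∑ i, x i * ξ i
    set A := ∑ i, D i (D i (LL e)) x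
    set B := ∑ i, Ph e i x * D i W x
    set H1 := ∑ i, ∑ j, ξ i * D i (Ph e j) x * ξ j
    set H2 := ∑ i, ∑ j, Ph e i x * D i (Ph e j) x * Ph e j x
    set S := ∑ i, Ph e i x * Ph e i x
    have f1 := mul_le_mul_of_nonneg_right fin (sq_nonneg y)
    have f2 := mul_nonneg (by positivity : 0 ≤ e/2 * P) sq
    have f3 : 0 ≤ e/2 * P * N := by positivity
    have f4 : e/2 * P * (1/4 * (U * U) * ‖x‖^2) ≤ H2 :=
      (mul_le_mul_of_nonneg_left hS2 (by positivity)).trans hH2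
    have f5 := mul_le_mul_of_nonneg_left f4 (by positivity : 0 ≤ 2 * t^2 * y^2)
    linarith

end UC

theorem stmt_12 (n : ℕ) (hn : 1 ≤ n) (δ : ℝ) (hδ : 0 < δ)
    (V : EuclideanSpace ℝ (Fin n) → ℝ) (hV : ContDiff ℝ (⊤ : ℕ∞) V)
    (hdecay : ∀ k : ℕ, ∃ C : ℝ, ∀ x,
      ‖iteratedFDeriv ℝ k V x‖ ≤ C * (1 + ‖x‖) ^ (-(δ + (k:ℝ))))
    (lam : ℝ)
    (ψ : EuclideanSpace ℝ (Fin n) → ℂ) (hψ : ContDiff ℝ (⊤ : ℕ∞) ψ)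
    (heq : ∀ x, -lap ψ x + (V x : ℂ) * ψ x = (lam : ℂ) * ψ x)
    (hdec : ∀ α : ℝ, Integrable (fun x => Real.exp (2*α*‖x‖) * ‖ψ x‖^2)) :
    ∀ x, ψ x = 0 := by
  obtain ⟨C0, hC0⟩ := hdecay 0
  obtain ⟨C1, hC1⟩ := hdecay 1
  set e := min δ (1/2) with he
  have he0 : 0 < e := lt_min hδ (by norm_num)
  have heδ : e ≤ δ := min_le_left _ _
  have heh : e ≤ 1/2 := min_le_right _ _
  have hW : UC.Sm (fun x => V x - lam) := UC.Sm.sub hV (UC.Sm.const lam)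
  have bW : ∀ x, |V x - lam| ≤ |C0| + |lam| := by
    intro x
    have h1 := hC0 x
    rw [norm_iteratedFDeriv_zero, Real.norm_eq_abs] at h1
    have h2 : (1 + ‖x‖) ^ (-(δ + ((0:ℕ):ℝ))) ≤ 1 :=
      Real.rpow_le_one_of_one_le_of_nonpos (by linarith [norm_nonneg x]) (by simp; linarith)
    have h3 : 0 ≤ (1 + ‖x‖) ^ (-(δ + ((0:ℕ):ℝ))) := by positivity
    have h4 : C0 * (1 + ‖x‖) ^ (-(δ + ((0:ℕ):ℝ))) ≤ |C0| := by
      nlinarith [le_abs_self C0, abs_nonneg C0]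
    have := abs_sub (V x) lam
    linarith
  have bW1 : ∀ i x, |UC.D i (fun x => V x - lam) x| ≤ |C1| * UC.rp (-(1+e)/2) x := by
    intro i x
    rw [UC.D_sub hV (UC.Sm.const lam), UC.D_const, sub_zero]
    have h1 := hC1 x
    rw [norm_iteratedFDeriv_one] at h1
    have h2 : |UC.D i V x| ≤ ‖fderiv ℝ V x‖ := by
      have := (fderiv ℝ V x).le_opNorm (EuclideanSpace.single i 1)
      simpa [UC.D] using this
    have h3 : (1 + ‖x‖) ^ (-(δ + ((1:ℕ):ℝ))) ≤ UC.rp (-(1+e)/2) x := by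
      have hx := norm_nonneg x
      have a1 : (1 + ‖x‖) ^ (-(δ + ((1:ℕ):ℝ))) ≤ (1 + ‖x‖) ^ (-(1+e)) := by
        refine Real.rpow_le_rpow_of_exponent_le (by linarith) ?_
        push_cast; linarith
      have a2 : (1 + ‖x‖) ^ (-(1+e)) = ((1 + ‖x‖) ^ 2) ^ (-(1+e)/2) := by
        rw [← Real.rpow_natCast, ← Real.rpow_mul (by linarith)]
        congr 1; push_cast; ring
      rw [a2] at a1
      refine a1.trans ?_
      unfold UC.rp
      exact Real.rpow_le_rpow_of_nonpos (by positivity) (by nlinarith) (by linarith)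
    have h4 : 0 ≤ (1 + ‖x‖) ^ (-(δ + ((1:ℕ):ℝ))) := by positivity
    calc |UC.D i V x| ≤ C1 * (1 + ‖x‖) ^ (-(δ + ((1:ℕ):ℝ))) := h2.trans h1
      _ ≤ |C1| * (1 + ‖x‖) ^ (-(δ + ((1:ℕ):ℝ))) :=
        mul_le_mul_of_nonneg_right (le_abs_self _) h4
      _ ≤ _ := mul_le_mul_of_nonneg_left h3 (abs_nonneg _)
  have main : ∀ T : ℂ →L[ℝ] ℝ, (∀ (r : ℝ) (z : ℂ), T ((r : ℂ) * z) = r * T z) →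
      (∀ z, |T z| ≤ ‖z‖) → ∀ x, T (ψ x) = 0 := by
    intro T hT hTb
    have hs : UC.Sm (fun x => T (ψ x)) := T.contDiff.comp hψ
    refine UC.main_real hn e he0 heh hW hs (|C0| + |lam|) |C1| bW bW1 ?_ ?_
    · intro x
      have hd : ∀ y, DifferentiableAt ℝ ψ y := hψ.differentiable (by simp)
      have hf : ContDiff ℝ (⊤ : ℕ∞) (fderiv ℝ ψ) :=
        ContDiff.fderiv_right (m := (⊤ : ℕ∞)) hψ (by simp)
      have e1 : ∀ i, UC.D i (fun x => T (ψ x))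
          = fun y => T (fderiv ℝ ψ y (EuclideanSpace.single i 1)) := by
        intro i; funext y
        have := (T.hasFDerivAt.comp y (hd y).hasFDerivAt).fderiv
        have h2 : fderiv ℝ (fun x => T (ψ x)) y = _ := this
        simp only [UC.D]
        rw [h2]; simp
      have e2 : ∀ i, UC.D i (UC.D i (fun x => T (ψ x))) x
          = T (fderiv ℝ (fun y => fderiv ℝ ψ y (EuclideanSpace.single i 1)) x
            (EuclideanSpace.single i 1)) := by
        intro i
        rw [e1]
        have hd2 : DifferentiableAt ℝ (fun y => fderiv ℝ ψ y (EuclideanSpace.single i 1)) x :=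
          (hf.clm_apply contDiff_const).differentiable (by simp) x
        have := (T.hasFDerivAt.comp x hd2.hasFDerivAt).fderiv
        have h2 : fderiv ℝ (fun y => T (fderiv ℝ ψ y (EuclideanSpace.single i 1))) x = _ := this
        simp only [UC.D]
        rw [h2]; simp
      rw [Finset.sum_congr rfl fun i _ => e2 i, ← map_sum]
      have h3 : lap ψ x = ((V x - lam : ℝ) : ℂ) * ψ x := by
        push_cast
        linear_combination -(heq x)
      unfold lap at h3
      rw [h3, hT]
    · intro α
      refine (hdec α).mono' ?_ ?_
      · have := hs.cont
        exact Continuous.aestronglyMeasurable (by fun_prop)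
      · refine Filter.Eventually.of_forall fun x => ?_
        rw [Real.norm_of_nonneg (by positivity)]
        refine mul_le_mul_of_nonneg_left ?_ (Real.exp_pos _).le
        rw [← sq_abs]
        exact pow_le_pow_left₀ (abs_nonneg _) (hTb _) 2
  intro x
  refine Complex.ext ?_ ?_
  · exact main Complex.reCLM (by intro r z; simp) (fun z => Complex.abs_re_le_norm z) x
  · exact main Complex.imCLM (by intro r z; simp) (fun z => Complex.abs_im_le_norm z) x
end
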